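/- arXiv:1805.10633 — 6 statements merged into one kernel-verified Lean document; each statement's English description precedes it below -/
import Mathlib

section
/- Let (X,Y) be a random pair with E[Y²] < ∞ and with continuous marginal cdf F of X, and let (X_1,Y_1), …, (X_n,Y_n) be independent copies of (X,Y). If the degeneracy condition B_n := n^{−1/2} Σ_{i=2}^n |Y_{i,n} − Y_{i−1,n}| → ∞ in probability holds, then the index I_n := (Σ_{i=2}^n (Y_{i,n} − Y_{i−1,n})₊) / (Σ_{i=2}^n |Y_{i,n} − Y_{i−1,n}|) converges in probability to 1/2 as n → ∞. -/
open MeasureTheory ProbabilityTheory Filter Set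

/-- The `i`-th order statistic (indexed `i = 1, …, n`) of the values
`X 1 ω, …, X n ω`. -/
noncomputable def orderStat {Ω : Type*} (X : ℕ → Ω → ℝ) (n i : ℕ) (ω : Ω) : ℝ :=
  (((Finset.Icc 1 n).val.map (fun j => X j ω)).sort (· ≤ ·)).getD (i - 1) 0

open Classical in
/-- The concomitant `Y_{i,n}`: the `Y`-value of the pair whose `X`-value is the
`i`-th order statistic `X_{i:n}` (well defined whenever the `X`-values are distinct,
which happens almost surely when the cdf of `X` is continuous). -/
noncomputable def concomitant {Ω : Type*} (X Y : ℕ → Ω → ℝ) (n i : ℕ) (ω : Ω) : ℝ :=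
  if hj : ∃ j, j ∈ Finset.Icc 1 n ∧ X j ω = orderStat X n i ω then Y hj.choose ω else 0

lemma conc_bound {Ω : Type*} (X Y : ℕ → Ω → ℝ) (n i : ℕ) (ω : Ω) (b : ℝ) (hb : 0 ≤ b)
    (h : ∀ j ∈ Finset.Icc 1 n, |Y j ω| ≤ b) : |concomitant X Y n i ω| ≤ b := by
  unfold concomitant
  split_ifs with hj
  · exact h _ hj.choose_spec.1
  · simpa using hb

lemma sum_tele (c : ℕ → ℝ) (n : ℕ) (hn : 1 ≤ n) :
    ∑ i ∈ Finset.Icc 2 n, (c i - c (i - 1)) = c n - c 1 := by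
  induction n, hn using Nat.le_induction with
  | base => simp
  | succ k hk ih =>
    rw [Finset.sum_Icc_succ_top (by omega), ih]
    simp

lemma index_det (c : ℕ → ℝ) (n : ℕ) (hn : 1 ≤ n) (ε b : ℝ) (hε : 0 < ε) (hb : 0 < b)
    (hc : ∀ i, |c i| ≤ b)
    (hS : b / ε < ∑ i ∈ Finset.Icc 2 n, |c i - c (i - 1)|) :
    |(∑ i ∈ Finset.Icc 2 n, max (c i - c (i - 1)) 0) /
      (∑ i ∈ Finset.Icc 2 n, |c i - c (i - 1)|) - 1 / 2| ≤ ε := by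
  have hmax : ∀ x : ℝ, max x 0 = (x + |x|) / 2 := by
    intro x
    rcases le_total x 0 with h | h
    · rw [max_eq_right h, abs_of_nonpos h]; ring
    · rw [max_eq_left h, abs_of_nonneg h]; ring
  have h1 : ∑ i ∈ Finset.Icc 2 n, max (c i - c (i - 1)) 0
      = ((c n - c 1) + ∑ i ∈ Finset.Icc 2 n, |c i - c (i - 1)|) / 2 := by
    rw [← sum_tele c n hn, ← Finset.sum_add_distrib, Finset.sum_div]
    exact Finset.sum_congr rfl fun i _ => hmax _
  rw [h1]
  set S := ∑ i ∈ Finset.Icc 2 n, |c i - c (i - 1)|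
  have hSp : 0 < S := lt_trans (by positivity) hS
  have h2 : ((c n - c 1) + S) / 2 / S - 1 / 2 = (c n - c 1) / (2 * S) := by
    field_simp; ring
  rw [h2, abs_div, abs_of_pos (by positivity : 0 < 2 * S), div_le_iff₀ (by positivity)]
  rw [div_lt_iff₀ hε] at hS
  have := abs_sub (c n) (c 1)
  have := hc n
  have := hc 1
  linarith

/-- **Theorem 1.** Let `(X₁,Y₁), (X₂,Y₂), …` be independent copies of a random pair
`(X,Y)` with `E[Y²] < ∞` and continuous marginal cdf `F` of `X`.  If the degeneracy
condition `Bₙ = n^{−1/2} Σ_{i=2}^n |Y_{i,n} − Y_{i−1,n}| → ∞` in probability holds,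
then `Iₙ = Σ (Y_{i,n} − Y_{i−1,n})₊ / Σ |Y_{i,n} − Y_{i−1,n}| → 1/2` in probability. -/
theorem index_tendsto_half_of_degenerate
    {Ω : Type*} [MeasurableSpace Ω] (P : Measure Ω) [IsProbabilityMeasure P]
    (X Y : ℕ → Ω → ℝ) (μ : Measure (ℝ × ℝ)) [IsProbabilityMeasure μ] (F : ℝ → ℝ)
    -- the pairs `(X i, Y i)` are iid with common law `μ`
    (hmeas : ∀ i, Measurable (fun ω => (X i ω, Y i ω)))
    (hindep : iIndepFun (fun i ω => (X i ω, Y i ω)) P)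
    (hlaw : ∀ i, Measure.map (fun ω => (X i ω, Y i ω)) P = μ)
    -- `F` is the (continuous) marginal cdf of `X`
    (hF : ∀ x, F x = (μ {p | p.1 ≤ x}).toReal)
    (hFcont : Continuous F)
    -- `Y` has a finite second moment
    (hY2 : Integrable (fun p : ℝ × ℝ => p.2 ^ 2) μ)
    -- the degeneracy condition: `Bₙ → ∞` in probability
    (hdeg : ∀ K > 0, Tendsto (fun n =>
      P {ω | (∑ i ∈ Finset.Icc 2 n,
          |concomitant X Y n i ω - concomitant X Y n (i - 1) ω|) / Real.sqrt n ≤ K})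
      atTop (nhds 0)) :
    ∀ ε > 0, Tendsto (fun n =>
      P {ω | ε <
        |(∑ i ∈ Finset.Icc 2 n,
            max (concomitant X Y n i ω - concomitant X Y n (i - 1) ω) 0) /
          (∑ i ∈ Finset.Icc 2 n,
            |concomitant X Y n i ω - concomitant X Y n (i - 1) ω|) - 1 / 2|})
      atTop (nhds 0) := by
  intro ε hε
  have hYm : ∀ j, Measurable (Y j) := fun j => (hmeas j).snd
  set C := ∫ p : ℝ × ℝ, p.2 ^ 2 ∂μ with hC
  have hC0 : 0 ≤ C := integral_nonneg fun p => sq_nonneg _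
  rw [ENNReal.tendsto_nhds_zero]
  intro δ hδ
  obtain ⟨r, hr0, hrδ⟩ := ENNReal.lt_iff_exists_nnreal_btwn.1 hδ
  have hr : (0 : ℝ) < r := by exact_mod_cast hr0
  set M := Real.sqrt (2 * (C + 1) / r) with hM
  have hM0 : 0 < M := Real.sqrt_pos.2 (by positivity)
  have hM2 : M ^ 2 = 2 * (C + 1) / r := Real.sq_sqrt (by positivity)
  have hd := hdeg (M / ε) (by positivity)
  rw [ENNReal.tendsto_nhds_zero] at hd
  have hr2 : (0 : ENNReal) < ENNReal.ofReal (r / 2) := by simpa using hr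
  filter_upwards [hd _ hr2, eventually_ge_atTop 1] with n hn hn1
  have hnp : (0 : ℝ) < n := by exact_mod_cast hn1
  have hs : 0 < Real.sqrt n := Real.sqrt_pos.2 hnp
  have hcheb : ∀ j, P {ω | M * Real.sqrt n < |Y j ω|} ≤ ENNReal.ofReal (r / 2 / n) := by
    intro j
    have hms : MeasurableSet {p : ℝ × ℝ | M ^ 2 * n ≤ p.2 ^ 2} :=
      measurableSet_le measurable_const (measurable_snd.pow_const 2)
    have h1 : P {ω | M * Real.sqrt n < |Y j ω|} ≤ μ {p : ℝ × ℝ | M ^ 2 * n ≤ p.2 ^ 2} := by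
      rw [← hlaw j, Measure.map_apply (hmeas j) hms]
      refine measure_mono fun ω hω => ?_
      simp only [mem_ofPred_eq, mem_preimage] at hω ⊢
      have h3 : (M * Real.sqrt n) ^ 2 ≤ |Y j ω| ^ 2 := pow_le_pow_left₀ (by positivity) hω.le 2
      rwa [mul_pow, Real.sq_sqrt hnp.le, sq_abs] at h3
    refine h1.trans ?_
    have h2 := mul_meas_ge_le_integral_of_nonneg (μ := μ)
      (f := fun p : ℝ × ℝ => p.2 ^ 2) (Eventually.of_forall fun p => sq_nonneg _) hY2 (M ^ 2 * n)
    rw [← ENNReal.ofReal_toReal (measure_ne_top μ _)]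
    apply ENNReal.ofReal_le_ofReal
    change M ^ 2 * n * (μ {p : ℝ × ℝ | M ^ 2 * n ≤ p.2 ^ 2}).toReal ≤ C at h2
    set q := (μ {p : ℝ × ℝ | M ^ 2 * n ≤ p.2 ^ 2}).toReal
    have h4 : q ≤ C / (M ^ 2 * n) := by
      rw [le_div_iff₀ (by positivity)]; linarith
    refine h4.trans ?_
    rw [hM2, div_le_div_iff₀ (by positivity) hnp]
    have : (r : ℝ) / 2 * (2 * (C + 1) / r * n) = (C + 1) * n := by field_simp
    rw [this]
    nlinarith
  have hsub : {ω | ε <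
        |(∑ i ∈ Finset.Icc 2 n,
            max (concomitant X Y n i ω - concomitant X Y n (i - 1) ω) 0) /
          (∑ i ∈ Finset.Icc 2 n,
            |concomitant X Y n i ω - concomitant X Y n (i - 1) ω|) - 1 / 2|} ⊆
      {ω | (∑ i ∈ Finset.Icc 2 n,
          |concomitant X Y n i ω - concomitant X Y n (i - 1) ω|) / Real.sqrt n ≤ M / ε} ∪
      ⋃ j ∈ Finset.Icc 1 n, {ω | M * Real.sqrt n < |Y j ω|} := by
    intro ω hω
    by_contra hcon
    simp only [mem_union, mem_iUnion, mem_ofPred_eq, not_or, not_exists, not_lt, not_le] at hcon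
    obtain ⟨hA, hB⟩ := hcon
    rw [mem_ofPred_eq] at hω
    refine absurd hω (not_lt.2 ?_)
    refine index_det (fun i => concomitant X Y n i ω) n hn1 ε (M * Real.sqrt n) hε
      (by positivity) (fun i => conc_bound X Y n i ω _ (by positivity) hB) ?_
    rw [lt_div_iff₀ hs] at hA
    calc M * Real.sqrt n / ε = M / ε * Real.sqrt n := by ring
      _ < _ := hA
  refine (measure_mono hsub).trans ((measure_union_le _ _).trans ?_)
  have hU : P (⋃ j ∈ Finset.Icc 1 n, {ω | M * Real.sqrt n < |Y j ω|}) ≤ ENNReal.ofReal (r / 2) := by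
    refine (measure_biUnion_finset_le _ _).trans ((Finset.sum_le_sum fun j _ => hcheb j).trans ?_)
    rw [← ENNReal.ofReal_sum_of_nonneg (fun _ _ => by positivity)]
    apply ENNReal.ofReal_le_ofReal
    simp only [Finset.sum_const, Nat.card_Icc, add_tsub_cancel_right, nsmul_eq_mul]
    apply le_of_eq
    field_simp
  refine (add_le_add hn hU).trans ?_
  rw [← ENNReal.ofReal_add (by positivity) (by positivity), add_halves, ENNReal.ofReal_coe_nnreal]
  exact hrδ.le
end

section
/- Let g: [0,1] → ℝ be γ-Hölder continuous with constant c for some γ ≥ 1/2, let t_{i,n} := (i−1)/(n−1), and let ε_1, ε_2, … be i.i.d. non-degenerate random variables with finite second moments. Set Y_{i,n} := g(t_{i,n}) + ε_i for i = 1, …, n. Then B_n := n^{−1/2} Σ_{i=2}^n |Y_{i,n} − Y_{i−1,n}| satisfies B_n ≥ √n · E|ε_2 − ε_1| + O_P(1) as n → ∞; in particular, since E|ε_2 − ε_1| > 0, B_n → ∞ in probability. -/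
open MeasureTheory ProbabilityTheory Filter Set

/-- A sequence of random variables `Z n` is `O_P(1)` (bounded in probability) if for
every `δ > 0` there is `C < ∞` with `limsup_n P(|Z n| > C) ≤ δ`. -/
def IsBoundedInProbability {Ω : Type*} [MeasurableSpace Ω] (P : Measure Ω)
    (Z : ℕ → Ω → ℝ) : Prop :=
  ∀ δ > 0, ∃ C : ℝ, Filter.limsup (fun n => P {ω | C < |Z n ω|}) Filter.atTop
    ≤ ENNReal.ofReal δ

section Helpers

variable {Ω : Type*} [MeasurableSpace Ω] {P : Measure Ω}
  {ε : ℕ → Ω → ℝ}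

/-- Absolute increments of the noise. -/
def absIncr (ε : ℕ → Ω → ℝ) (i : ℕ) (ω : Ω) : ℝ := |ε i ω - ε (i - 1) ω|

lemma memLp_eps (hm : ∀ i, Measurable (ε i))
    (h2 : ∀ i, Integrable (fun ω => (ε i ω) ^ 2) P) (i : ℕ) : MemLp (ε i) 2 P :=
  (memLp_two_iff_integrable_sq (hm i).aestronglyMeasurable).2 (h2 i)

lemma memLp_absIncr (hm : ∀ i, Measurable (ε i))
    (h2 : ∀ i, Integrable (fun ω => (ε i ω) ^ 2) P) (i : ℕ) : MemLp (absIncr ε i) 2 P :=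
  ((memLp_eps hm h2 i).sub (memLp_eps hm h2 (i - 1))).abs

lemma identDistrib_absIncr [IsProbabilityMeasure P] (hm : ∀ i, Measurable (ε i))
    (hind : iIndepFun (m := fun _ => inferInstance) ε P)
    (hid : ∀ i, Measure.map (ε i) P = Measure.map (ε 1) P) {i : ℕ} (hi : 2 ≤ i) :
    IdentDistrib (absIncr ε i) (absIncr ε 2) P P := by
  have key : ∀ j, 2 ≤ j → P.map (fun ω => (ε j ω, ε (j - 1) ω))
      = (P.map (ε 1)).prod (P.map (ε 1)) := by
    intro j hj
    have h := (indepFun_iff_map_prod_eq_prod_map_map (hm j).aemeasurable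
      (hm (j - 1)).aemeasurable).1 (hind.indepFun (show j ≠ j - 1 by omega))
    rw [h, hid j, hid (j - 1)]
  have hp : IdentDistrib (fun ω => (ε i ω, ε (i - 1) ω)) (fun ω => (ε 2 ω, ε (2 - 1) ω)) P P :=
    ⟨((hm i).prodMk (hm (i - 1))).aemeasurable, ((hm 2).prodMk (hm (2 - 1))).aemeasurable,
      (key i hi).trans (key 2 le_rfl).symm⟩
  exact hp.comp (u := fun p : ℝ × ℝ => |p.1 - p.2|) (by fun_prop)

lemma indep_absIncr [IsProbabilityMeasure P] (hm : ∀ i, Measurable (ε i))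
    (hind : iIndepFun (m := fun _ => inferInstance) ε P) {i j : ℕ} (hi : 2 ≤ i) (hj : 2 ≤ j)
    (h1 : i ≠ j) (h2 : i ≠ j - 1) (h3 : i - 1 ≠ j) :
    IndepFun (absIncr ε i) (absIncr ε j) P := by
  have h := hind.indepFun_prodMk_prodMk hm i (i - 1) j (j - 1) h1 h2 h3 (by omega)
  exact h.comp (φ := fun p : ℝ × ℝ => |p.1 - p.2|) (ψ := fun p : ℝ × ℝ => |p.1 - p.2|)
    (by fun_prop) (by fun_prop)

lemma variance_sum_absIncr [IsProbabilityMeasure P] (hm : ∀ i, Measurable (ε i))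
    (hind : iIndepFun (m := fun _ => inferInstance) ε P)
    (hid : ∀ i, Measure.map (ε i) P = Measure.map (ε 1) P)
    (h2 : ∀ i, Integrable (fun ω => (ε i ω) ^ 2) P) (n : ℕ) :
    variance (fun ω => ∑ i ∈ Finset.Icc 2 n, absIncr ε i ω) P
      ≤ 3 * variance (absIncr ε 2) P * n := by
  have hL := memLp_absIncr (P := P) hm h2
  set v := variance (absIncr ε 2) P with hv
  have hv0 : 0 ≤ v := variance_nonneg _ _
  have hvi : ∀ i, 2 ≤ i → variance (absIncr ε i) P = v := fun i hi =>
    (identDistrib_absIncr hm hind hid hi).variance_eq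
  rw [variance_fun_sum' (fun i _ => hL i)]
  have hcov : ∀ i ∈ Finset.Icc 2 n, ∀ j ∈ Finset.Icc 2 n,
      covariance (absIncr ε i) (absIncr ε j) P
        ≤ if j ∈ ({i - 1, i, i + 1} : Finset ℕ) then v else 0 := by
    intro i hi j hj
    rw [Finset.mem_Icc] at hi hj
    split_ifs with h
    · have h0 := variance_nonneg (absIncr ε i - absIncr ε j) P
      rw [variance_sub (hL i) (hL j), hvi i hi.1, hvi j hj.1] at h0
      linarith
    · simp only [Finset.mem_insert, Finset.mem_singleton, not_or] at h
      refine ((indep_absIncr hm hind hi.1 hj.1 ?_ ?_ ?_).covariance_eq_zero (hL i) (hL j)).le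
      all_goals omega
  have hrow : ∀ i ∈ Finset.Icc 2 n, ∑ j ∈ Finset.Icc 2 n,
      covariance (absIncr ε i) (absIncr ε j) P ≤ 3 * v := by
    intro i hi
    refine (Finset.sum_le_sum (hcov i hi)).trans ?_
    rw [← Finset.sum_filter, Finset.sum_const, nsmul_eq_mul]
    refine mul_le_mul_of_nonneg_right ?_ hv0
    have : (Finset.filter (fun j => j ∈ ({i - 1, i, i + 1} : Finset ℕ)) (Finset.Icc 2 n)).card
        ≤ 3 := (Finset.card_le_card (fun x hx => (Finset.mem_filter.1 hx).2)).trans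
          Finset.card_le_three
    exact_mod_cast this
  refine (Finset.sum_le_sum hrow).trans ?_
  rw [Finset.sum_const, nsmul_eq_mul, mul_comm]
  refine mul_le_mul_of_nonneg_left ?_ (by positivity)
  rw [Nat.card_Icc]
  exact_mod_cast (by omega)

lemma integral_absIncr_pos [IsProbabilityMeasure P] (hm : ∀ i, Measurable (ε i))
    (hind : iIndepFun (m := fun _ => inferInstance) ε P)
    (hnd : ¬ ∃ a : ℝ, ∀ᵐ ω ∂P, ε 1 ω = a)
    (h2 : ∀ i, Integrable (fun ω => (ε i ω) ^ 2) P) :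
    0 < ∫ ω, |ε 2 ω - ε 1 ω| ∂P := by
  have hL := memLp_eps (P := P) hm h2
  refine lt_of_le_of_ne (integral_nonneg fun _ => abs_nonneg _) fun h0 => hnd ?_
  have hI : Integrable (fun ω => |ε 2 ω - ε 1 ω|) P :=
    (memLp_absIncr (P := P) hm h2 2).integrable one_le_two
  have hz := (integral_eq_zero_iff_of_nonneg (fun _ => abs_nonneg _) hI).1 h0.symm
  have hz' : ε 2 - ε 1 =ᵐ[P] 0 := by
    filter_upwards [hz] with ω hω
    simpa using hω
  have hvar := variance_congr hz'
  rw [variance_zero, variance_sub (hL 2) (hL 1),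
    (hind.indepFun (show 2 ≠ 1 by norm_num)).covariance_eq_zero (hL 2) (hL 1)] at hvar
  have hv1 : variance (ε 1) P = 0 := by
    have := variance_nonneg (ε 1) P
    have := variance_nonneg (ε 2) P
    linarith
  have he : evariance (ε 1) P = 0 := by
    rw [← (hL 1).ofReal_variance_eq, hv1, ENNReal.ofReal_zero]
  exact ⟨_, (evariance_eq_zero_iff (hm 1).aemeasurable).1 he⟩

/-- The remainder term. -/
noncomputable def remTerm (P : Measure Ω) (ε : ℕ → Ω → ℝ) (c : ℝ) (n : ℕ) (ω : Ω) : ℝ :=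
  (∑ i ∈ Finset.Icc 2 n, absIncr ε i ω - ((n : ℝ) - 1) * ∫ ω', |ε 2 ω' - ε 1 ω'| ∂P) / √n
    - (∫ ω', |ε 2 ω' - ε 1 ω'| ∂P) / √n - c

lemma measure_remTerm_le [IsProbabilityMeasure P] (hm : ∀ i, Measurable (ε i))
    (hind : iIndepFun (m := fun _ => inferInstance) ε P)
    (hid : ∀ i, Measure.map (ε i) P = Measure.map (ε 1) P)
    (h2 : ∀ i, Integrable (fun ω => (ε i ω) ^ 2) P) {c : ℝ} (hc : 0 < c)
    {C : ℝ} (hC : 0 < C) {n : ℕ} (hn : 2 ≤ n) :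
    P {ω | C + (∫ ω', |ε 2 ω' - ε 1 ω'| ∂P) + c < |remTerm P ε c n ω|}
      ≤ ENNReal.ofReal (3 * variance (absIncr ε 2) P / C ^ 2) := by
  have hL := memLp_absIncr (P := P) hm h2
  set m := ∫ ω', |ε 2 ω' - ε 1 ω'| ∂P with hmdef
  have hm0 : 0 ≤ m := integral_nonneg fun _ => abs_nonneg _
  have hn1 : (1 : ℝ) ≤ n := by exact_mod_cast (by omega : 1 ≤ n)
  have hs1 : 1 ≤ √(n : ℝ) := Real.one_le_sqrt.2 hn1
  have hsp : 0 < √(n : ℝ) := by linarith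
  have hint : ∫ ω, (∑ i ∈ Finset.Icc 2 n, absIncr ε i ω) ∂P = ((n : ℝ) - 1) * m := by
    rw [integral_finset_sum _ (fun i _ => (hL i).integrable one_le_two)]
    have : ∀ i ∈ Finset.Icc 2 n, ∫ ω, absIncr ε i ω ∂P = m := fun i hi =>
      (identDistrib_absIncr hm hind hid (Finset.mem_Icc.1 hi).1).integral_eq
    rw [Finset.sum_congr rfl this, Finset.sum_const, nsmul_eq_mul, Nat.card_Icc]
    congr 1
    rw [show n + 1 - 2 = n - 1 by omega, Nat.cast_sub (by omega), Nat.cast_one]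
  have hch := meas_ge_le_variance_div_sq (μ := P)
    (memLp_finsetSum (Finset.Icc 2 n) (fun i _ => hL i)) (mul_pos hC hsp)
  rw [hint] at hch
  refine (measure_mono ?_).trans (hch.trans (ENNReal.ofReal_le_ofReal ?_))
  · intro ω hω
    simp only [Set.mem_setOf_eq, remTerm, ← hmdef] at hω ⊢
    set S := ∑ i ∈ Finset.Icc 2 n, absIncr ε i ω - ((n : ℝ) - 1) * m with hS
    have h1 : m / √(n : ℝ) ≤ m := div_le_self hm0 hs1
    have h1' : 0 ≤ m / √(n : ℝ) := by positivity
    have h3 : |S / √(n : ℝ) - m / √(n : ℝ) - c| ≤ |S / √(n : ℝ)| + m + c := by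
      rw [abs_le]
      constructor
      · linarith [neg_abs_le (S / √(n : ℝ))]
      · linarith [le_abs_self (S / √(n : ℝ))]
    have h4 : C < |S / √(n : ℝ)| := by linarith
    rw [abs_div, abs_of_pos hsp, lt_div_iff₀ hsp] at h4
    exact h4.le
  · rw [mul_pow, Real.sq_sqrt (by linarith), div_le_div_iff₀ (by positivity) (by positivity)]
    have := variance_sum_absIncr (P := P) hm hind hid h2 n
    calc _ ≤ 3 * variance (absIncr ε 2) P * n * C ^ 2 :=
          mul_le_mul_of_nonneg_right this (by positivity)
      _ = _ := by ring

lemma bounded_remTerm [IsProbabilityMeasure P] (hm : ∀ i, Measurable (ε i))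
    (hind : iIndepFun (m := fun _ => inferInstance) ε P)
    (hid : ∀ i, Measure.map (ε i) P = Measure.map (ε 1) P)
    (h2 : ∀ i, Integrable (fun ω => (ε i ω) ^ 2) P) {c : ℝ} (hc : 0 < c)
    {δ : ℝ} (hδ : 0 < δ) :
    ∃ C : ℝ, ∀ n : ℕ, 2 ≤ n → P {ω | C < |remTerm P ε c n ω|} ≤ ENNReal.ofReal δ := by
  set v := variance (absIncr ε 2) P
  have hv0 : 0 ≤ v := variance_nonneg _ _
  have hC : 0 < √(3 * v / δ + 1) := Real.sqrt_pos.2 (by positivity)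
  refine ⟨_, fun n hn => (measure_remTerm_le hm hind hid h2 hc hC hn).trans
    (ENNReal.ofReal_le_ofReal ?_)⟩
  rw [Real.sq_sqrt (by positivity), div_le_iff₀ (by positivity), mul_add,
    mul_div_cancel₀ _ hδ.ne']
  linarith

lemma lower_bound {g : ℝ → ℝ} {γ c : ℝ} (hγ : 1 / 2 ≤ γ) (hc : 0 < c)
    (hH : ∀ s ∈ Set.Icc (0:ℝ) 1, ∀ t ∈ Set.Icc (0:ℝ) 1,
      |g s - g t| ≤ c * |s - t| ^ γ) (P : Measure Ω) (ε : ℕ → Ω → ℝ) {n : ℕ} (hn : 2 ≤ n) (ω : Ω) :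
    (∑ i ∈ Finset.Icc (2:ℕ) n,
            |(g (((i:ℝ) - 1) / ((n:ℝ) - 1)) + ε i ω)
              - (g (((i:ℝ) - 2) / ((n:ℝ) - 1)) + ε (i - 1) ω)|) / Real.sqrt n
          ≥ Real.sqrt n * (∫ ω', |ε 2 ω' - ε 1 ω'| ∂P) + remTerm P ε c n ω := by
  unfold remTerm
  set m := ∫ ω', |ε 2 ω' - ε 1 ω'| ∂P
  have hn2 : (2 : ℝ) ≤ n := by exact_mod_cast hn
  have hd : (0 : ℝ) < (n : ℝ) - 1 := by linarith
  have hsp : 0 < √(n : ℝ) := Real.sqrt_pos.2 (by linarith)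
  have hss : √(n : ℝ) * √(n : ℝ) = n := Real.mul_self_sqrt (by linarith)
  have hterm : ∀ i ∈ Finset.Icc 2 n, absIncr ε i ω - c * (1 / ((n : ℝ) - 1)) ^ γ ≤
      |(g (((i:ℝ) - 1) / ((n:ℝ) - 1)) + ε i ω)
              - (g (((i:ℝ) - 2) / ((n:ℝ) - 1)) + ε (i - 1) ω)| := by
    intro i hi
    rw [Finset.mem_Icc] at hi
    have hi2 : (2 : ℝ) ≤ i := by exact_mod_cast hi.1
    have hin : (i : ℝ) ≤ n := by exact_mod_cast hi.2
    have h := hH (((i:ℝ) - 1) / ((n:ℝ) - 1))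
      ⟨div_nonneg (by linarith) hd.le, (div_le_one hd).2 (by linarith)⟩
      (((i:ℝ) - 2) / ((n:ℝ) - 1))
      ⟨div_nonneg (by linarith) hd.le, (div_le_one hd).2 (by linarith)⟩
    rw [← sub_div, show (i : ℝ) - 1 - (i - 2) = 1 by ring,
      abs_of_pos (by positivity : 0 < 1 / ((n : ℝ) - 1))] at h
    set a := g (((i:ℝ) - 1) / ((n:ℝ) - 1))
    set b := g (((i:ℝ) - 2) / ((n:ℝ) - 1))
    have h5 : |ε i ω - ε (i - 1) ω| ≤ |a + ε i ω - (b + ε (i - 1) ω)| + |a - b| := by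
      calc _ = |(a + ε i ω - (b + ε (i - 1) ω)) - (a - b)| := by congr 1; ring
        _ ≤ _ := abs_sub _ _
    unfold absIncr
    linarith
  have hsum := Finset.sum_le_sum hterm
  rw [Finset.sum_sub_distrib, Finset.sum_const, nsmul_eq_mul, Nat.card_Icc,
    show n + 1 - 2 = n - 1 by omega, Nat.cast_sub (by omega), Nat.cast_one] at hsum
  have hpow : ((n : ℝ) - 1) * (c * (1 / ((n : ℝ) - 1)) ^ γ) ≤ c * √(n : ℝ) := by
    have h1 : (1 / ((n : ℝ) - 1)) ^ γ ≤ (1 / ((n : ℝ) - 1)) ^ (1 / 2 : ℝ) :=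
      Real.rpow_le_rpow_of_exponent_ge (by positivity) ((div_le_one hd).2 (by linarith)) hγ
    rw [← Real.sqrt_eq_rpow, Real.sqrt_div zero_le_one, Real.sqrt_one] at h1
    have hq : 0 < √((n : ℝ) - 1) := Real.sqrt_pos.2 hd
    have hqq : √((n : ℝ) - 1) * √((n : ℝ) - 1) = (n : ℝ) - 1 := Real.mul_self_sqrt hd.le
    calc ((n : ℝ) - 1) * (c * (1 / ((n : ℝ) - 1)) ^ γ)
        ≤ ((n : ℝ) - 1) * (c * (1 / √((n : ℝ) - 1))) := by gcongr
      _ = c * √((n : ℝ) - 1) := by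
          nth_rewrite 1 [← hqq]
          field_simp
      _ ≤ c * √(n : ℝ) := by gcongr; linarith
  rw [ge_iff_le, le_div_iff₀ hsp]
  have e : (√(n : ℝ) * m + ((∑ i ∈ Finset.Icc 2 n, absIncr ε i ω - ((n : ℝ) - 1) * m) / √n
    - m / √n - c)) * √n = ∑ i ∈ Finset.Icc 2 n, absIncr ε i ω - c * √n := by
    have e1 : ∀ x : ℝ, x / √(n : ℝ) * √(n : ℝ) = x := fun x => div_mul_cancel₀ x hsp.ne'
    rw [add_mul, sub_mul, sub_mul, e1, e1, mul_right_comm, hss]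
    ring
  rw [e]
  linarith

end Helpers

theorem noisy_B_tendsto_infty
    {Ω : Type*} [MeasurableSpace Ω] (P : Measure Ω) [IsProbabilityMeasure P]
    (g : ℝ → ℝ) (γ c : ℝ) (hγ : 1 / 2 ≤ γ) (hc : 0 < c)
    (hHolder : ∀ s ∈ Set.Icc (0:ℝ) 1, ∀ t ∈ Set.Icc (0:ℝ) 1,
      |g s - g t| ≤ c * |s - t| ^ γ)
    (ε : ℕ → Ω → ℝ)
    -- the errors are iid
    (hεmeas : ∀ i, Measurable (ε i))
    (hεindep : iIndepFun (m := fun _ => inferInstance) ε P)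
    (hεid : ∀ i, Measure.map (ε i) P = Measure.map (ε 1) P)
    -- they are non-degenerate and have finite second moments
    (hεnondeg : ¬ ∃ a : ℝ, ∀ᵐ ω ∂P, ε 1 ω = a)
    (hε2 : ∀ i, Integrable (fun ω => (ε i ω) ^ 2) P) :
    (∃ R : ℕ → Ω → ℝ, IsBoundedInProbability P R ∧
      ∀ n : ℕ, 2 ≤ n → ∀ ω,
        (∑ i ∈ Finset.Icc (2:ℕ) n,
            |(g (((i:ℝ) - 1) / ((n:ℝ) - 1)) + ε i ω)
              - (g (((i:ℝ) - 2) / ((n:ℝ) - 1)) + ε (i - 1) ω)|) / Real.sqrt n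
          ≥ Real.sqrt n * (∫ ω', |ε 2 ω' - ε 1 ω'| ∂P) + R n ω) ∧
    (∀ K > 0, Tendsto (fun n =>
      P {ω | (∑ i ∈ Finset.Icc (2:ℕ) n,
          |(g (((i:ℝ) - 1) / ((n:ℝ) - 1)) + ε i ω)
            - (g (((i:ℝ) - 2) / ((n:ℝ) - 1)) + ε (i - 1) ω)|) / Real.sqrt n ≤ K})
      atTop (nhds 0)) := by
  have hm0 := integral_absIncr_pos hεmeas hεindep hεnondeg hε2
  refine ⟨⟨remTerm P ε c, ?_, fun n hn ω => lower_bound hγ hc hHolder P ε hn ω⟩, ?_⟩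
  · intro δ hδ
    obtain ⟨C, hC⟩ := bounded_remTerm hεmeas hεindep hεid hε2 hc hδ
    refine ⟨C, Filter.limsup_le_of_le (by isBoundedDefault) ?_⟩
    filter_upwards [eventually_ge_atTop 2] with n hn using hC n hn
  · intro K _
    rw [ENNReal.tendsto_nhds_zero]
    intro η hη
    obtain ⟨δ, hδ, hδη⟩ : ∃ δ : ℝ, 0 < δ ∧ ENNReal.ofReal δ ≤ η := by
      by_cases ht : η = ⊤
      · exact ⟨1, one_pos, by simp [ht]⟩
      · exact ⟨η.toReal, ENNReal.toReal_pos hη.ne' ht, ENNReal.ofReal_toReal_le⟩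
    obtain ⟨C, hC⟩ := bounded_remTerm hεmeas hεindep hεid hε2 hc hδ
    have ht : Tendsto (fun n : ℕ => √(n : ℝ) * ∫ ω', |ε 2 ω' - ε 1 ω'| ∂P) atTop atTop :=
      (Real.tendsto_sqrt_atTop.comp tendsto_natCast_atTop_atTop).atTop_mul_const hm0
    filter_upwards [eventually_ge_atTop 2, ht.eventually_gt_atTop (K + C)] with n hn hlarge
    refine (measure_mono ?_).trans ((hC n hn).trans hδη)
    intro ω hω
    have h := lower_bound hγ hc hHolder P ε hn ω
    simp only [Set.mem_setOf_eq] at hω ⊢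
    have := neg_abs_le (remTerm P ε c n ω)
    linarith
end

section
/- Let U_1, …, U_n be independent uniform-[0,1] random variables with order statistics U_{1:n} ≤ ⋯ ≤ U_{n:n}, let θ ∈ (0,1) and b ∈ (0,1]. Then, with p_{i,n} := i/(n+1), there is a constant C (depending only on b, θ) such that E[ Σ_{i=2}^{⌊nθ⌋} p_{i,n}^{−2+b} |U_{i:n} − p_{i,n}| (U_{i:n} − U_{i−1:n}) ] ≤ C (log n) / min{n^{b}, n^{1/2}} for all n ≥ 2; in particular this sum converges to 0 in probability as n → ∞. -/
open MeasureTheory ProbabilityTheory Filter Set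

noncomputable def cntLE {Ω : Type*} (U : ℕ → Ω → ℝ) (n : ℕ) (x : ℝ) (ω : Ω) : ℕ :=
  ((Finset.Icc 1 n).filter (fun j => U j ω ≤ x)).card

lemma countP_of_sorted (l : List ℝ) (hl : l.Pairwise (· ≤ ·)) (k : ℕ) (x : ℝ) (hk : 1 ≤ k)
    (hkl : k < l.length) (h1 : l.getD (k - 1) 0 ≤ x) (h2 : x < l.getD k 0) :
    l.countP (fun a => decide (a ≤ x)) = k := by
  have hmono := fun (i j : ℕ) (hi : i < l.length) (hj : j < l.length) (hij : i < j) =>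
    List.pairwise_iff_getElem.1 hl i j hi hj hij
  rw [List.getD_eq_getElem _ _ (by omega)] at h1
  rw [List.getD_eq_getElem _ _ (by omega)] at h2
  conv_lhs => rw [← List.take_append_drop k l]
  rw [List.countP_append]
  have e1 : (l.take k).countP (fun a => decide (a ≤ x)) = (l.take k).length := by
    rw [List.countP_eq_length]
    intro a ha
    obtain ⟨j, hj, rfl⟩ := List.getElem_of_mem ha
    simp only [List.length_take] at hj
    simp only [List.getElem_take, decide_eq_true_eq]
    rcases Nat.lt_or_ge j (k-1) with h | h
    · exact (hmono j (k-1) (by omega) (by omega) h).trans h1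
    · have : j = k - 1 := by omega
      subst this; exact h1
  have e2 : (l.drop k).countP (fun a => decide (a ≤ x)) = 0 := by
    rw [List.countP_eq_zero]
    intro a ha
    obtain ⟨j, hj, rfl⟩ := List.getElem_of_mem ha
    simp only [List.length_drop] at hj
    simp only [List.getElem_drop, decide_eq_true_eq, not_le]
    rcases Nat.eq_zero_or_pos j with h | h
    · subst h; exact h2
    · exact h2.trans_le (hmono k (k+j) (by omega) (by omega) (by omega))
  rw [e1, e2]; simp; omega

section
variable {Ω : Type*} (U : ℕ → Ω → ℝ) (n : ℕ)

lemma cntLE_eq_of_orderStat (i : ℕ) (hi : 2 ≤ i) (hin : i ≤ n) (ω : Ω) (x : ℝ)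
    (h1 : orderStat U n (i-1) ω ≤ x) (h2 : x < orderStat U n i ω) : cntLE U n x ω = i - 1 := by
  unfold orderStat at h1 h2
  have := countP_of_sorted _ (Multiset.pairwise_sort
    ((Finset.Icc 1 n).val.map (fun j => U j ω)) (· ≤ ·)) (i-1) x (by omega)
    (by simp; omega) h1 h2
  rw [← this, ← Multiset.coe_countP, Multiset.sort_eq, Multiset.countP_map]
  rfl

lemma orderStat_mono (i : ℕ) (hi : 2 ≤ i) (hin : i ≤ n) (ω : Ω) :
    orderStat U n (i-1) ω ≤ orderStat U n i ω := by
  unfold orderStat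
  have hl : (((Finset.Icc 1 n).val.map (fun j => U j ω)).sort (· ≤ ·)).length = n := by simp
  rw [List.getD_eq_getElem _ _ (by omega), List.getD_eq_getElem _ _ (by omega)]
  exact List.pairwise_iff_getElem.1 (Multiset.pairwise_sort
    ((Finset.Icc 1 n).val.map (fun j => U j ω)) (· ≤ ·)) _ _ _ _ (by omega)

lemma orderStat_mem (i : ℕ) (hi : 1 ≤ i) (hin : i ≤ n) (ω : Ω) (h : ∀ j, U j ω ∈ Icc (0:ℝ) 1) :
    orderStat U n i ω ∈ Icc (0:ℝ) 1 := by
  unfold orderStat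
  have hl : (((Finset.Icc 1 n).val.map (fun j => U j ω)).sort (· ≤ ·)).length = n := by simp
  rw [List.getD_eq_getElem _ _ (by omega)]
  have hm := List.getElem_mem (l := ((Finset.Icc 1 n).val.map (fun j => U j ω)).sort (· ≤ ·))
    (n := i - 1) (by omega)
  rw [Multiset.mem_sort, Multiset.mem_map] at hm
  obtain ⟨j, -, hj⟩ := hm
  rw [← hj]; exact h j
end

lemma beta_nat (k l : ℕ) : ∫ x in (0:ℝ)..1, x ^ k * (1 - x) ^ l =
    (k.factorial * l.factorial : ℝ) / (k + l + 1).factorial := by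
  induction l generalizing k with
  | zero =>
    simp [Nat.factorial_succ]
    field_simp
  | succ l ih =>
    have hparts := intervalIntegral.integral_mul_deriv_eq_deriv_mul (a := (0:ℝ)) (b := 1)
      (u := fun x : ℝ => (1-x)^(l+1)) (u' := fun x => -((l+1:ℕ) * (1-x)^l))
      (v := fun x => x^(k+1) / (k+1)) (v' := fun x => x^k)
      (by
        intro x _
        have := ((hasDerivAt_id x).const_sub 1).pow (l+1)
        convert this using 1
        · ext; simp
        · simp)
      (by
        intro x _
        have := (hasDerivAt_pow (k+1) x).div_const ((k:ℝ)+1)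
        convert this using 1
        push_cast
        field_simp)
      (Continuous.intervalIntegrable (by fun_prop) _ _)
      (Continuous.intervalIntegrable (by fun_prop) _ _)
    have e : ∫ x in (0:ℝ)..1, x ^ k * (1 - x) ^ (l+1) = ∫ x in (0:ℝ)..1, (1-x)^(l+1) * x^k := by
      congr 1; ext x; ring
    rw [e, hparts]
    have e2 : ∫ x in (0:ℝ)..1, -(((l+1:ℕ):ℝ) * (1-x)^l) * (x^(k+1) / (k+1))
        = -((l+1)/(k+1)) * ∫ x in (0:ℝ)..1, x^(k+1) * (1-x)^l := by
      rw [← intervalIntegral.integral_const_mul]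
      congr 1; ext x; push_cast; ring
    rw [e2, ih]
    have : k + 1 + l + 1 = k + (l+1) + 1 := by ring
    rw [this, Nat.factorial_succ k, Nat.factorial_succ l]
    simp
    field_simp

/-- Bernstein density integral. -/
lemma bern_moments (n k : ℕ) (hk : k ≤ n) :
    (∫ x in (0:ℝ)..1, (n.choose k : ℝ) * x ^ k * (1 - x) ^ (n - k) = 1 / (n + 1)) ∧
    (∫ x in (0:ℝ)..1, (n.choose k : ℝ) * x ^ (k+1) * (1 - x) ^ (n - k)
      = (k + 1) / ((n + 1) * (n + 2))) ∧
    (∫ x in (0:ℝ)..1, (n.choose k : ℝ) * x ^ (k+2) * (1 - x) ^ (n - k)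
      = (k + 1) * (k + 2) / ((n + 1) * (n + 2) * (n + 3))) := by
  have hc : (n.choose k : ℝ) * (k.factorial * (n-k).factorial) = n.factorial := by
    rw [← Nat.choose_mul_factorial_mul_factorial hk]; push_cast; ring
  have hnf : (n.factorial : ℝ) ≠ 0 := by positivity
  refine ⟨?_, ?_, ?_⟩
  · simp_rw [mul_assoc]
    rw [intervalIntegral.integral_const_mul, beta_nat, ← mul_div_assoc, hc]
    rw [show k + (n-k) + 1 = n + 1 by omega, Nat.factorial_succ]
    push_cast; field_simp
  · simp_rw [mul_assoc]
    rw [intervalIntegral.integral_const_mul, beta_nat, ← mul_div_assoc]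
    rw [show k + 1 + (n-k) + 1 = n + 1 + 1 by omega, Nat.factorial_succ (n+1), Nat.factorial_succ n,
      Nat.factorial_succ k]
    have : (n.choose k : ℝ) * (((k+1) * k.factorial : ℕ) * (n-k).factorial) = (k+1) * n.factorial := by
      rw [← hc]; push_cast; ring
    rw [this]
    push_cast; field_simp; ring
  · simp_rw [mul_assoc]
    rw [intervalIntegral.integral_const_mul, beta_nat, ← mul_div_assoc]
    rw [show k + 2 + (n-k) + 1 = n + 1 + 1 + 1 by omega, Nat.factorial_succ (n+1+1),
      Nat.factorial_succ (n+1), Nat.factorial_succ n,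
      show k + 2 = k + 1 + 1 by omega, Nat.factorial_succ (k+1), Nat.factorial_succ k]
    have : (n.choose k : ℝ) * (((k+1+1) * ((k+1) * k.factorial) : ℕ) * (n-k).factorial)
       = (k+1+1) * ((k+1) * n.factorial) := by
      rw [← hc]; push_cast; ring
    rw [this]
    push_cast; field_simp; ring

lemma bern_abs (n k : ℕ) (hk : k ≤ n) (hn : 1 ≤ n) (p : ℝ) (hp : p = ((k:ℝ)+1) / (n+1)) :
    ∫ x in (0:ℝ)..1, |x - p| * ((n.choose k : ℝ) * x ^ k * (1 - x) ^ (n - k))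
      ≤ √((k:ℝ)+1) / ((n:ℝ)+1)^2 := by
  obtain ⟨h0, h1, h2⟩ := bern_moments n k hk
  set s : ℝ := √((k:ℝ)+1) / (n+1) with hs
  have hs0 : 0 < s := by positivity
  have hs2 : s^2 = ((k:ℝ)+1) / (n+1)^2 := by
    rw [hs, div_pow, Real.sq_sqrt (by positivity)]
  have step : ∫ x in (0:ℝ)..1, |x - p| * ((n.choose k : ℝ) * x ^ k * (1 - x) ^ (n - k))
      ≤ ∫ x in (0:ℝ)..1, ((1/(2*s)) * ((n.choose k : ℝ) * x ^ (k+2) * (1 - x) ^ (n - k))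
        + (-(p/s)) * ((n.choose k : ℝ) * x ^ (k+1) * (1 - x) ^ (n - k))
        + (p^2/(2*s)+s/2) * ((n.choose k : ℝ) * x ^ k * (1 - x) ^ (n - k))) := by
    apply intervalIntegral.integral_mono_on (by norm_num)
      (Continuous.intervalIntegrable (by fun_prop) _ _)
      (Continuous.intervalIntegrable (by fun_prop) _ _)
    intro x hx
    have hx1 : 0 ≤ x := hx.1
    have hx2 : 0 ≤ 1 - x := by linarith [hx.2]
    have hB : 0 ≤ (n.choose k : ℝ) * x ^ k * (1 - x) ^ (n - k) := by positivity
    have key : |x - p| ≤ (x-p)^2/(2*s) + s/2 := by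
      rw [← sq_abs (x-p)]
      rw [div_add_div _ _ (by positivity) (by norm_num), le_div_iff₀ (by positivity)]
      nlinarith [sq_nonneg (|x-p| - s)]
    calc _ ≤ ((x-p)^2/(2*s) + s/2) * ((n.choose k : ℝ) * x ^ k * (1 - x) ^ (n - k)) := by gcongr
      _ = _ := by
        rw [pow_add x k 2, pow_succ x k]
        field_simp
        ring
  refine step.trans ?_
  rw [intervalIntegral.integral_add (Continuous.intervalIntegrable (by fun_prop) _ _)
      (Continuous.intervalIntegrable (by fun_prop) _ _),
    intervalIntegral.integral_add (Continuous.intervalIntegrable (by fun_prop) _ _)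
      (Continuous.intervalIntegrable (by fun_prop) _ _),
    intervalIntegral.integral_const_mul, intervalIntegral.integral_const_mul,
    intervalIntegral.integral_const_mul, h0, h1, h2]
  have hvar : ((k:ℝ) + 1) * (k + 2) / ((n + 2) * (n + 3)) - 2 * p * ((k+1) / (n+2)) + p^2 ≤ s^2 := by
    rw [hs2, hp]
    have hn' : (1:ℝ) ≤ n := by exact_mod_cast hn
    have hk0 : (0:ℝ) ≤ k := by positivity
    have e : ((k:ℝ)+1) / (n+1)^2 - (((k:ℝ) + 1) * (k + 2) / ((n + 2) * (n + 3))
        - 2 * (((k:ℝ)+1) / (n+1)) * ((k+1) / (n+2)) + (((k:ℝ)+1) / (n+1))^2)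
        = ((k:ℝ)+1) * (((n + 2) * (n + 3) - (n+1)^2) + (k+1) * (n-1)) /
          ((n+1)^2 * (n+2) * (n+3)) := by
      field_simp; ring
    have : 0 ≤ ((k:ℝ)+1) * (((n + 2) * (n + 3) - (n+1)^2) + (k+1) * (n-1)) /
          ((n+1)^2 * (n+2) * (n+3)) := by
      apply div_nonneg _ (by positivity)
      have : 0 ≤ ((k:ℝ)+1) * (n-1) := mul_nonneg (by positivity) (by linarith)
      apply mul_nonneg (by positivity)
      nlinarith
    linarith
  have e : 1 / (2 * s) * (((k:ℝ) + 1) * (k + 2) / ((n + 1) * (n + 2) * (n + 3))) +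
      -(p / s) * ((k + 1) / ((n + 1) * (n + 2))) + (p ^ 2 / (2 * s) + s / 2) * (1 / (n + 1))
      = (1/(2*s*(n+1))) * ((((k:ℝ) + 1) * (k + 2) / ((n + 2) * (n + 3)) - 2 * p * ((k+1) / (n+2)) + p^2) + s^2) := by
    field_simp
    ring
  rw [e]
  calc _ ≤ (1/(2*s*(n+1))) * (s^2 + s^2) := by gcongr
    _ = s / (n+1) := by field_simp; ring
    _ = _ := by rw [hs]; field_simp

lemma sum_inv_le_log (n : ℕ) (hn : 1 ≤ n) : ∑ i ∈ Finset.Icc 2 n, ((i:ℝ))⁻¹ ≤ Real.log n := by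
  have h := harmonic_le_one_add_log n
  rw [harmonic_eq_sum_Icc, ← Finset.add_sum_Ioc_eq_sum_Icc hn] at h
  push_cast at h
  have : Finset.Icc 2 n = Finset.Ioc 1 n := by ext; simp; omega
  rw [this]; simp at h; linarith

lemma weight_bound (n i : ℕ) (hi : 2 ≤ i) (hin : i ≤ n) (b : ℝ) (hb : 0 < b) :
    ((i:ℝ) / ((n:ℝ) + 1)) ^ (-2 + b : ℝ) * (√(i:ℝ) / ((n:ℝ)+1)^2) ≤
      (i:ℝ)⁻¹ / min ((n:ℝ) ^ (b : ℝ)) ((n:ℝ) ^ ((1:ℝ)/2)) := by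
  have hi0 : (0:ℝ) < i := by positivity
  have hn0 : (0:ℝ) < n := by exact_mod_cast (by omega : 0 < n)
  have hm0 : (0:ℝ) < (n:ℝ) + 1 := by positivity
  have hin' : (i:ℝ) ≤ n := by exact_mod_cast hin
  have hi1 : (1:ℝ) ≤ i := by exact_mod_cast (by omega : 1 ≤ i)
  have e : ((i:ℝ) / ((n:ℝ) + 1)) ^ (-2 + b : ℝ) * (√(i:ℝ) / ((n:ℝ)+1)^2)
      = (i:ℝ)⁻¹ * ((i:ℝ) ^ (b - 1/2) / ((n:ℝ)+1)^b) := by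
    rw [Real.div_rpow hi0.le hm0.le, Real.sqrt_eq_rpow, ← Real.rpow_natCast, div_mul_div_comm,
      ← Real.rpow_add hi0, ← Real.rpow_add hm0, ← Real.rpow_neg_one, ← mul_div_assoc,
      ← Real.rpow_add hi0]
    congr 2
    · ring
    · push_cast; ring
  rw [e, div_eq_mul_inv _ (min _ _)]
  gcongr
  rw [div_le_iff₀ (by positivity), inv_mul_eq_div, le_div_iff₀ (by positivity)]
  rcases le_total b (1/2) with h | h
  · calc _ ≤ (1:ℝ) * (n:ℝ)^b := by
          gcongr
          · exact Real.rpow_le_one_of_one_le_of_nonpos hi1 (by linarith)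
          · exact min_le_left _ _
      _ ≤ _ := by rw [one_mul]; gcongr; linarith
  · calc _ ≤ (n:ℝ)^(b-1/2) * (n:ℝ)^((1:ℝ)/2) := by
          gcongr
          exact min_le_right _ _
      _ = (n:ℝ)^b := by rw [← Real.rpow_add hn0]; congr 1; ring
      _ ≤ _ := by gcongr; linarith

open scoped ENNReal

section
variable {Ω : Type*} [MeasurableSpace Ω] (P : Measure Ω) [IsProbabilityMeasure P]
    (U : ℕ → Ω → ℝ)

lemma measurable_cntLE (hUmeas : ∀ i, Measurable (U i)) (n : ℕ) {α : Type*} [MeasurableSpace α]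
    {f : α → ℝ} {g : α → Ω} (hf : Measurable f) (hg : Measurable g) :
    Measurable (fun q => cntLE U n (f q) (g q)) := by
  unfold cntLE
  simp_rw [Finset.card_filter]
  apply Finset.measurable_fun_sum
  intro j _
  exact Measurable.ite (measurableSet_le ((hUmeas j).comp hg) hf) measurable_const measurable_const

lemma prob_cnt_le
    (hUmeas : ∀ i, Measurable (U i))
    (hUindep : iIndepFun U P)
    (hUunif : ∀ i, Measure.map (U i) P = volume.restrict (Icc (0:ℝ) 1))
    (n k : ℕ) (x y : ℝ) (hx : 0 ≤ x) (hxy : x ≤ y) (hy : y ≤ 1) :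
    P {ω | cntLE U n x ω = k ∧ cntLE U n y ω = k} ≤
      ENNReal.ofReal ((n.choose k : ℝ) * x ^ k * (1 - y) ^ (n - k)) := by
  have hle : ∀ j, P (U j ⁻¹' Iic x) = ENNReal.ofReal x := by
    intro j
    rw [← Measure.map_apply (hUmeas j) measurableSet_Iic, hUunif j,
      Measure.restrict_apply measurableSet_Iic]
    have : Iic x ∩ Icc (0:ℝ) 1 = Icc 0 x := by
      ext z; simp only [mem_inter_iff, mem_Iic, mem_Icc]; constructor
      · rintro ⟨a, b, c⟩; exact ⟨b, a⟩
      · rintro ⟨a, b⟩; exact ⟨b, a, by linarith⟩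
    rw [this, Real.volume_Icc, sub_zero]
  have hgt : ∀ j, P (U j ⁻¹' Ioi y) = ENNReal.ofReal (1 - y) := by
    intro j
    rw [← Measure.map_apply (hUmeas j) measurableSet_Ioi, hUunif j,
      Measure.restrict_apply measurableSet_Ioi]
    have : Ioi y ∩ Icc (0:ℝ) 1 = Ioc y 1 := by
      ext z; simp only [mem_inter_iff, mem_Ioi, mem_Icc, mem_Ioc]; constructor
      · rintro ⟨a, b, c⟩; exact ⟨a, c⟩
      · rintro ⟨a, b⟩; exact ⟨a, by linarith, b⟩
    rw [this, Real.volume_Ioc]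
  classical
  have hsub : {ω | cntLE U n x ω = k ∧ cntLE U n y ω = k} ⊆
      ⋃ A ∈ (Finset.Icc 1 n).powersetCard k, ⋂ j ∈ Finset.Icc 1 n,
        U j ⁻¹' (if j ∈ A then Iic x else Ioi y) := by
    rintro ω ⟨h1, h2⟩
    simp only [mem_iUnion]
    refine ⟨(Finset.Icc 1 n).filter (fun j => U j ω ≤ x), ?_, ?_⟩
    · rw [Finset.mem_powersetCard]; exact ⟨Finset.filter_subset _ _, h1⟩
    · have hEq : (Finset.Icc 1 n).filter (fun j => U j ω ≤ x) =
          (Finset.Icc 1 n).filter (fun j => U j ω ≤ y) := by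
        apply Finset.eq_of_subset_of_card_le
        · intro j hj
          rw [Finset.mem_filter] at hj ⊢
          exact ⟨hj.1, hj.2.trans hxy⟩
        · exact (h2.trans h1.symm).le
      simp only [mem_iInter]
      intro j hj
      by_cases h : U j ω ≤ x
      · rw [if_pos (by rw [Finset.mem_filter]; exact ⟨hj, h⟩)]; exact h
      · have h' : j ∉ (Finset.Icc 1 n).filter (fun j => U j ω ≤ x) := by
          rw [Finset.mem_filter]; tauto
        rw [if_neg h']
        rw [hEq, Finset.mem_filter] at h'
        simp only [mem_preimage, mem_Ioi]
        by_contra hh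
        exact h' ⟨hj, not_lt.1 hh⟩
  calc _ ≤ _ := measure_mono hsub
    _ ≤ ∑ A ∈ (Finset.Icc 1 n).powersetCard k, P (⋂ j ∈ Finset.Icc 1 n,
        U j ⁻¹' (if j ∈ A then Iic x else Ioi y)) := measure_biUnion_finset_le _ _
    _ = ∑ A ∈ (Finset.Icc 1 n).powersetCard k,
        ENNReal.ofReal x ^ k * ENNReal.ofReal (1 - y) ^ (n - k) := by
      apply Finset.sum_congr rfl
      intro A hA
      rw [Finset.mem_powersetCard] at hA
      rw [hUindep.measure_inter_preimage_eq_mul (Finset.Icc 1 n)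
        (sets := fun j => if j ∈ A then Iic x else Ioi y)
        (by intro j _; split_ifs; exacts [measurableSet_Iic, measurableSet_Ioi])]
      have : ∀ j ∈ Finset.Icc 1 n, P (U j ⁻¹' (if j ∈ A then Iic x else Ioi y)) =
          if j ∈ A then ENNReal.ofReal x else ENNReal.ofReal (1-y) := by
        intro j _; split_ifs; exacts [hle j, hgt j]
      rw [Finset.prod_congr rfl this, Finset.prod_ite, Finset.prod_const, Finset.prod_const,
        Finset.filter_mem_eq_inter, Finset.inter_eq_right.2 hA.1, Finset.filter_notMem_eq_sdiff,
        Finset.card_sdiff_of_subset hA.1, hA.2]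
      simp
    _ = _ := by
      rw [Finset.sum_const, Finset.card_powersetCard, ENNReal.ofReal_mul (by positivity),
        ENNReal.ofReal_mul (by positivity), ENNReal.ofReal_pow hx,
        ENNReal.ofReal_pow (by linarith), ENNReal.ofReal_natCast]
      simp [mul_assoc]

open Classical in
/-- dominating function -/
noncomputable def domF {Ω : Type*} (U : ℕ → Ω → ℝ) (n k : ℕ) (p : ℝ) (ω : Ω) (x : ℝ) : ℝ≥0∞ :=
  ENNReal.ofReal |x - p| * (if cntLE U n x ω = k ∧ cntLE U n x ω = k then 1 else 0) +
    ∫⁻ y in Icc (0:ℝ) 1, if x ≤ y ∧ cntLE U n x ω = k ∧ cntLE U n y ω = k then 1 else 0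

lemma measurable_domF (hUmeas : ∀ i, Measurable (U i)) (n k : ℕ) (p : ℝ) :
    Measurable (fun q : Ω × ℝ => domF U n k p q.1 q.2) := by
  unfold domF
  apply Measurable.add
  · apply Measurable.mul (by fun_prop)
    refine Measurable.ite ?_ measurable_const measurable_const
    have := measurable_cntLE U hUmeas n (measurable_snd (α := Ω) (β := ℝ)) measurable_fst
    exact (this (measurableSet_singleton k)).inter (this (measurableSet_singleton k))
  · apply Measurable.lintegral_prod_right'
      (f := fun q : (Ω × ℝ) × ℝ => if q.1.2 ≤ q.2 ∧ cntLE U n q.1.2 q.1.1 = k ∧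
        cntLE U n q.2 q.1.1 = k then (1:ℝ≥0∞) else 0)
    refine Measurable.ite ?_ measurable_const measurable_const
    refine (measurableSet_le (f := fun q : (Ω × ℝ) × ℝ => q.1.2) (g := fun q => q.2)
      (by fun_prop) (by fun_prop)).inter (MeasurableSet.inter ?_ ?_)
    · exact measurable_cntLE U hUmeas n (α := (Ω × ℝ) × ℝ) (f := fun q => q.1.2)
        (g := fun q => q.1.1) (by fun_prop) (by fun_prop) (measurableSet_singleton k)
    · exact measurable_cntLE U hUmeas n (α := (Ω × ℝ) × ℝ) (f := fun q => q.2)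
        (g := fun q => q.1.1) (by fun_prop) (by fun_prop) (measurableSet_singleton k)

lemma lintegral_ite_one {Ω : Type*} [MeasurableSpace Ω] (P : Measure Ω) {s : Ω → Prop} [DecidablePred s] (hs : MeasurableSet {ω | s ω}) :
    ∫⁻ ω, (if s ω then (1:ℝ≥0∞) else 0) ∂P = P {ω | s ω} := by
  rw [← lintegral_indicator_one hs]
  apply lintegral_congr
  intro ω
  simp [indicator]

lemma domF_expect_x
    (hUmeas : ∀ i, Measurable (U i))
    (hUindep : iIndepFun U P)
    (hUunif : ∀ i, Measure.map (U i) P = volume.restrict (Icc (0:ℝ) 1))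
    (n k : ℕ) (hk : k ≤ n) (p x : ℝ) (hx : x ∈ Icc (0:ℝ) 1) :
    ∫⁻ ω, domF U n k p ω x ∂P ≤ ENNReal.ofReal
      (|x - p| * ((n.choose k : ℝ) * x ^ k * (1 - x) ^ (n - k)) +
        (1 / ((n:ℝ) - k + 1)) * ((n.choose k : ℝ) * x ^ k * (1 - x) ^ (n - k))) := by
  classical
  have hx0 := hx.1
  have hx1 : 0 ≤ 1 - x := by linarith [hx.2]
  have hkn : (0:ℝ) < (n:ℝ) - k + 1 := by
    have : (k:ℝ) ≤ n := by exact_mod_cast hk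
    linarith
  have mset : ∀ z, MeasurableSet {ω | cntLE U n z ω = k} := fun z =>
    measurable_cntLE U hUmeas n (measurable_const (a := z)) measurable_id
      (measurableSet_singleton k)
  have mset2 : ∀ y, MeasurableSet {ω | cntLE U n x ω = k ∧ cntLE U n y ω = k} := fun y =>
    (mset x).inter (mset y)
  unfold domF
  rw [lintegral_add_left, lintegral_const_mul, ENNReal.ofReal_add (by positivity) (by positivity)]
  rotate_left
  · exact Measurable.ite (mset2 x) measurable_const measurable_const
  · exact (Measurable.ite (mset2 x) measurable_const measurable_const).const_mul _
  apply add_le_add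
  · rw [ENNReal.ofReal_mul (abs_nonneg _)]
    gcongr
    rw [lintegral_ite_one P (mset2 x)]
    exact prob_cnt_le P U hUmeas hUindep hUunif n k x x hx.1 le_rfl hx.2
  · rw [lintegral_lintegral_swap]
    swap
    · apply Measurable.aemeasurable
      refine Measurable.ite ?_ measurable_const measurable_const
      refine (measurableSet_le (f := fun q : Ω × ℝ => x) (g := fun q => q.2)
        (by fun_prop) (by fun_prop)).inter (MeasurableSet.inter ?_ ?_)
      · exact measurable_cntLE U hUmeas n (α := Ω × ℝ) (f := fun q => x)
          (g := fun q => q.1) (by fun_prop) (by fun_prop) (measurableSet_singleton k)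
      · exact measurable_cntLE U hUmeas n (α := Ω × ℝ) (f := fun q => q.2)
          (g := fun q => q.1) (by fun_prop) (by fun_prop) (measurableSet_singleton k)
    calc _ ≤ ∫⁻ y in Icc (0:ℝ) 1, (Icc x 1).indicator
          (fun y => ENNReal.ofReal ((n.choose k : ℝ) * x ^ k * (1 - y) ^ (n - k))) y := by
          apply setLIntegral_mono'  measurableSet_Icc
          intro y hy
          by_cases hxy : x ≤ y
          · rw [indicator_of_mem (show y ∈ Icc x 1 from ⟨hxy, hy.2⟩)]
            simp only [hxy, true_and]
            rw [lintegral_ite_one P (mset2 y)]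
            exact prob_cnt_le P U hUmeas hUindep hUunif n k x y hx.1 hxy hy.2
          · simp [hxy]
      _ ≤ ∫⁻ y, (Icc x 1).indicator
          (fun y => ENNReal.ofReal ((n.choose k : ℝ) * x ^ k * (1 - y) ^ (n - k))) y :=
          setLIntegral_le_lintegral _ _
      _ = ∫⁻ y in Icc x 1, ENNReal.ofReal ((n.choose k : ℝ) * x ^ k * (1 - y) ^ (n - k)) :=
          lintegral_indicator measurableSet_Icc _
      _ = ENNReal.ofReal (∫ y in Icc x 1, (n.choose k : ℝ) * x ^ k * (1 - y) ^ (n - k)) := by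
          rw [ofReal_integral_eq_lintegral_ofReal]
          · exact (Continuous.continuousOn (by fun_prop)).integrableOn_Icc
          · rw [EventuallyLE, ae_restrict_iff' measurableSet_Icc]
            refine ae_of_all _ fun y hy => ?_
            have : 0 ≤ 1 - y := by linarith [hy.2]
            simp only [Pi.zero_apply]; positivity
      _ ≤ _ := by
          apply ENNReal.ofReal_le_ofReal
          rw [integral_Icc_eq_integral_Ioc, ← intervalIntegral.integral_of_le hx.2,
            intervalIntegral.integral_const_mul,
            intervalIntegral.integral_comp_sub_left (fun y => y ^ (n-k)) 1, integral_pow,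
            Nat.cast_sub hk]
          simp only [sub_self, ne_eq, Nat.succ_ne_zero, not_false_eq_true, zero_pow, sub_zero]
          have : (1 - x)^(n-k+1) ≤ (1-x)^(n-k) := pow_le_pow_of_le_one hx1 (by linarith) (by omega)
          calc _ ≤ (n.choose k : ℝ) * x ^ k * ((1-x)^(n-k) / ((n:ℝ) - k + 1)) := by gcongr
            _ = _ := by field_simp

lemma domF_expect
    (hUmeas : ∀ i, Measurable (U i))
    (hUindep : iIndepFun U P)
    (hUunif : ∀ i, Measure.map (U i) P = volume.restrict (Icc (0:ℝ) 1))
    (n k : ℕ) (hk : k ≤ n) (hn : 1 ≤ n) (p : ℝ) (hp : p = ((k:ℝ)+1) / (n+1)) :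
    ∫⁻ ω, (∫⁻ x in Icc (0:ℝ) 1, domF U n k p ω x) ∂P ≤ ENNReal.ofReal
      (√((k:ℝ)+1) / ((n:ℝ)+1)^2 + 1 / ((n:ℝ) - k + 1) * (1 / (n + 1))) := by
  have hkn : (0:ℝ) < (n:ℝ) - k + 1 := by
    have : (k:ℝ) ≤ n := by exact_mod_cast hk
    linarith
  rw [lintegral_lintegral_swap (measurable_domF U hUmeas n k p).aemeasurable]
  calc _ ≤ ∫⁻ x in Icc (0:ℝ) 1, ENNReal.ofReal
        (|x - p| * ((n.choose k : ℝ) * x ^ k * (1 - x) ^ (n - k)) +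
        (1 / ((n:ℝ) - k + 1)) * ((n.choose k : ℝ) * x ^ k * (1 - x) ^ (n - k))) := by
        apply setLIntegral_mono' measurableSet_Icc
        intro x hx
        exact domF_expect_x P U hUmeas hUindep hUunif n k hk p x hx
    _ = ENNReal.ofReal (∫ x in Icc (0:ℝ) 1,
        (|x - p| * ((n.choose k : ℝ) * x ^ k * (1 - x) ^ (n - k)) +
        (1 / ((n:ℝ) - k + 1)) * ((n.choose k : ℝ) * x ^ k * (1 - x) ^ (n - k)))) := by
        rw [ofReal_integral_eq_lintegral_ofReal]
        · exact (Continuous.continuousOn (by fun_prop)).integrableOn_Icc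
        · rw [EventuallyLE, ae_restrict_iff' measurableSet_Icc]
          refine ae_of_all _ fun x hx => ?_
          have : 0 ≤ 1 - x := by linarith [hx.2]
          have := hx.1
          simp only [Pi.zero_apply]; positivity
    _ ≤ _ := by
        apply ENNReal.ofReal_le_ofReal
        rw [integral_Icc_eq_integral_Ioc, ← intervalIntegral.integral_of_le zero_le_one,
          intervalIntegral.integral_add (Continuous.intervalIntegrable (by fun_prop) _ _)
            (Continuous.intervalIntegrable (by fun_prop) _ _),
          intervalIntegral.integral_const_mul, (bern_moments n k hk).1]
        gcongr
        exact bern_abs n k hk hn p hp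

lemma pointwise_bound (n i : ℕ) (hi : 2 ≤ i) (hin : i ≤ n) (p : ℝ) (ω : Ω)
    (h : ∀ j, U j ω ∈ Icc (0:ℝ) 1) :
    ENNReal.ofReal (|orderStat U n i ω - p| * (orderStat U n i ω - orderStat U n (i - 1) ω)) ≤
      ∫⁻ x in Icc (0:ℝ) 1, domF U n (i-1) p ω x := by
  classical
  have hc := orderStat_mem U n i (by omega) hin ω h
  have ha := orderStat_mem U n (i-1) (by omega) (by omega) ω h
  have hcnt := cntLE_eq_of_orderStat U n i hi hin ω
  set c := orderStat U n i ω
  set a := orderStat U n (i-1) ω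
  have hsub : Ico a c ⊆ Icc 0 1 := fun x hx => ⟨ha.1.trans hx.1, hx.2.le.trans hc.2⟩
  calc _ = ∫⁻ x in Ico a c, ENNReal.ofReal |c - p| := by
        rw [setLIntegral_const, Real.volume_Ico, ENNReal.ofReal_mul (abs_nonneg _)]
    _ ≤ ∫⁻ x in Ico a c, domF U n (i-1) p ω x := by
        apply setLIntegral_mono' measurableSet_Ico
        intro x hx
        have hx' := hcnt x hx.1 hx.2
        unfold domF
        simp only [hx', and_self, if_true, mul_one, true_and]
        calc ENNReal.ofReal |c - p| ≤ ENNReal.ofReal (|x - p| + (c - x)) := by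
              apply ENNReal.ofReal_le_ofReal
              have := abs_add_le (x - p) (c - x)
              rw [abs_of_nonneg (by linarith [hx.2] : 0 ≤ c - x)] at this
              rwa [show x - p + (c - x) = c - p by ring] at this
          _ = ENNReal.ofReal |x - p| + ENNReal.ofReal (c - x) :=
              ENNReal.ofReal_add (abs_nonneg _) (by linarith [hx.2])
          _ ≤ _ := by
              gcongr
              calc _ = ∫⁻ y in Ico x c, 1 := by rw [setLIntegral_one, Real.volume_Ico]
                _ ≤ ∫⁻ y in Ico x c, (if x ≤ y ∧ cntLE U n y ω = i - 1 then 1 else 0) := by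
                  apply setLIntegral_mono' measurableSet_Ico
                  intro y hy
                  rw [if_pos ⟨hy.1, hcnt y (hx.1.trans hy.1) hy.2⟩]
                _ ≤ _ := lintegral_mono_set
                  (fun y hy => hsub ⟨hx.1.trans hy.1, hy.2⟩)
    _ ≤ _ := lintegral_mono_set hsub
end

lemma exists_dom
    {Ω : Type*} [MeasurableSpace Ω] (P : Measure Ω) [IsProbabilityMeasure P]
    (U : ℕ → Ω → ℝ)
    (hUmeas : ∀ i, Measurable (U i))
    (hUindep : iIndepFun U P)
    (hUunif : ∀ i, Measure.map (U i) P = volume.restrict (Icc (0:ℝ) 1))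
    (θ b : ℝ) (hθ0 : 0 < θ) (hθ1 : θ < 1) (hb : 0 < b) (n : ℕ) (hn : 2 ≤ n) :
    ∃ G : Ω → ℝ≥0∞, Measurable G ∧
      (∫⁻ ω, G ω ∂P) ≤ ENNReal.ofReal ((1 + 1 / (1 - θ)) * Real.log n /
        min ((n:ℝ) ^ (b : ℝ)) ((n:ℝ) ^ ((1:ℝ)/2))) ∧
      ∀ᵐ ω ∂P, ENNReal.ofReal |∑ i ∈ Finset.Icc (2:ℕ) ⌊(n:ℝ) * θ⌋₊,
          ((i:ℝ) / ((n:ℝ) + 1)) ^ (-2 + b : ℝ) *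
            (|orderStat U n i ω - (i:ℝ) / ((n:ℝ) + 1)| *
              (orderStat U n i ω - orderStat U n (i - 1) ω))| ≤ G ω := by
  have h1θ : 0 < 1 - θ := by linarith
  have hn0 : (0:ℝ) < n := by exact_mod_cast (by omega : 0 < n)
  have hfl : ∀ i ∈ Finset.Icc (2:ℕ) ⌊(n:ℝ) * θ⌋₊, 2 ≤ i ∧ (i:ℝ) ≤ n * θ ∧ i ≤ n := by
    intro i hi
    rw [Finset.mem_Icc] at hi
    have h1 : (i:ℝ) ≤ n * θ := (Nat.le_floor_iff (by positivity)).1 hi.2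
    refine ⟨hi.1, h1, ?_⟩
    have : (i:ℝ) ≤ n := by nlinarith
    exact_mod_cast this
  have hFm : ∀ i, Measurable (fun ω =>
      ∫⁻ x in Icc (0:ℝ) 1, domF U n (i-1) ((i:ℝ) / ((n:ℝ) + 1)) ω x) := fun i =>
    (measurable_domF U hUmeas n (i-1) ((i:ℝ) / ((n:ℝ) + 1))).lintegral_prod_right'
  refine ⟨fun ω => ∑ i ∈ Finset.Icc (2:ℕ) ⌊(n:ℝ) * θ⌋₊,
    ENNReal.ofReal (((i:ℝ) / ((n:ℝ) + 1)) ^ (-2 + b : ℝ)) *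
      ∫⁻ x in Icc (0:ℝ) 1, domF U n (i-1) ((i:ℝ) / ((n:ℝ) + 1)) ω x, ?_, ?_, ?_⟩
  · exact Finset.measurable_fun_sum _ fun i _ => (hFm i).const_mul _
  · rw [lintegral_finsetSum _ (fun i _ => (hFm i).const_mul _)]
    calc _ ≤ ∑ i ∈ Finset.Icc (2:ℕ) ⌊(n:ℝ) * θ⌋₊, ENNReal.ofReal ((1 + 1 / (1 - θ)) *
          ((i:ℝ)⁻¹ / min ((n:ℝ) ^ (b : ℝ)) ((n:ℝ) ^ ((1:ℝ)/2)))) := by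
          apply Finset.sum_le_sum
          intro i hi
          obtain ⟨hi2, hiθ, hin⟩ := hfl i hi
          have hi1 : (1:ℝ) ≤ i := by exact_mod_cast (by omega : 1 ≤ i)
          have hcast : ((i-1:ℕ):ℝ) = (i:ℝ) - 1 := by
            rw [Nat.cast_sub (by omega)]; simp
          have hsq : 1 ≤ √(i:ℝ) := Real.one_le_sqrt.2 hi1
          rw [lintegral_const_mul _ (hFm i)]
          have := domF_expect P U hUmeas hUindep hUunif n (i-1) (by omega) (by omega)
            ((i:ℝ) / ((n:ℝ) + 1)) (by rw [hcast]; ring)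
          refine (mul_le_mul_right this _).trans ?_
          rw [← ENNReal.ofReal_mul (by positivity)]
          apply ENNReal.ofReal_le_ofReal
          rw [hcast, sub_add_cancel]
          have hden : (1 - θ) * (n + 1) ≤ (n:ℝ) - (i - 1) + 1 := by nlinarith
          have h2 : √(i:ℝ) / ((n:ℝ)+1)^2 + 1 / ((n:ℝ) - (i-1) + 1) * (1 / (n + 1)) ≤
              (1 + 1 / (1 - θ)) * (√(i:ℝ) / ((n:ℝ)+1)^2) := by
            have : 1 / ((n:ℝ) - (i-1) + 1) * (1 / (n + 1)) ≤
                1 / (1-θ) * (√(i:ℝ) / ((n:ℝ)+1)^2) := by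
              calc _ ≤ 1 / ((1 - θ) * (n + 1)) * (1 / ((n:ℝ) + 1)) := by gcongr
                _ = 1 / (1-θ) * (1 / ((n:ℝ)+1)^2) := by field_simp
                _ ≤ _ := by gcongr
            linarith
          calc _ ≤ ((i:ℝ) / ((n:ℝ) + 1)) ^ (-2 + b : ℝ) *
                ((1 + 1 / (1 - θ)) * (√(i:ℝ) / ((n:ℝ)+1)^2)) := by gcongr
            _ = (1 + 1 / (1 - θ)) * (((i:ℝ) / ((n:ℝ) + 1)) ^ (-2 + b : ℝ) *
                (√(i:ℝ) / ((n:ℝ)+1)^2)) := by ring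
            _ ≤ _ := by
                gcongr
                exact weight_bound n i hi2 hin b hb
      _ = ENNReal.ofReal (∑ i ∈ Finset.Icc (2:ℕ) ⌊(n:ℝ) * θ⌋₊, ((1 + 1 / (1 - θ)) *
          ((i:ℝ)⁻¹ / min ((n:ℝ) ^ (b : ℝ)) ((n:ℝ) ^ ((1:ℝ)/2))))) := by
          rw [ENNReal.ofReal_sum_of_nonneg]
          intro i _; positivity
      _ ≤ _ := by
          apply ENNReal.ofReal_le_ofReal
          rw [← Finset.mul_sum, ← Finset.sum_div, mul_div_assoc]
          gcongr
          refine (Finset.sum_le_sum_of_subset_of_nonneg (t := Finset.Icc 2 n) ?_ ?_).trans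
            (sum_inv_le_log n (by omega))
          · intro i hi
            obtain ⟨h1, -, h2⟩ := hfl i hi
            rw [Finset.mem_Icc]; exact ⟨h1, h2⟩
          · intro i _ _; positivity
  · have hae : ∀ᵐ ω ∂P, ∀ j, U j ω ∈ Icc (0:ℝ) 1 := by
      rw [ae_all_iff]
      intro j
      have : ∀ᵐ x ∂(Measure.map (U j) P), x ∈ Icc (0:ℝ) 1 := by
        rw [hUunif j]; exact ae_restrict_mem measurableSet_Icc
      exact ae_of_ae_map (hUmeas j).aemeasurable this
    filter_upwards [hae] with ω hω
    have hnn : ∀ i ∈ Finset.Icc (2:ℕ) ⌊(n:ℝ) * θ⌋₊, 0 ≤ ((i:ℝ) / ((n:ℝ) + 1)) ^ (-2 + b : ℝ) *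
            (|orderStat U n i ω - (i:ℝ) / ((n:ℝ) + 1)| *
              (orderStat U n i ω - orderStat U n (i - 1) ω)) := by
      intro i hi
      obtain ⟨h1, -, h2⟩ := hfl i hi
      have := sub_nonneg.2 (orderStat_mono U n i h1 h2 ω)
      positivity
    rw [abs_of_nonneg (Finset.sum_nonneg hnn), ENNReal.ofReal_sum_of_nonneg hnn]
    apply Finset.sum_le_sum
    intro i hi
    obtain ⟨h1, -, h2⟩ := hfl i hi
    rw [ENNReal.ofReal_mul (by positivity)]
    gcongr
    exact pointwise_bound U n i h1 h2 _ ω hω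

/-- For iid uniform-[0,1] random variables, `θ ∈ (0,1)` and `b ∈ (0,1]`, there is a
constant `C` such that, with `p_{i,n} = i/(n+1)`,
`E[Σ_{i=2}^{⌊nθ⌋} p_{i,n}^{−2+b} |U_{i:n} − p_{i,n}| (U_{i:n} − U_{i−1:n})]
  ≤ C log n / min(n^b, n^{1/2})` for all `n ≥ 2`;
in particular the sum converges to `0` in probability. -/
theorem weighted_deviation_spacings_first_moment
    {Ω : Type*} [MeasurableSpace Ω] (P : Measure Ω) [IsProbabilityMeasure P]
    (U : ℕ → Ω → ℝ)
    (hUmeas : ∀ i, Measurable (U i))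
    (hUindep : iIndepFun U P)
    (hUunif : ∀ i, Measure.map (U i) P = volume.restrict (Icc (0:ℝ) 1))
    (θ b : ℝ) (hθ : θ ∈ Ioo (0:ℝ) 1) (hb : 0 < b) (hb1 : b ≤ 1) :
    (∃ C : ℝ, 0 < C ∧ ∀ n : ℕ, 2 ≤ n →
      (∫ ω, ∑ i ∈ Finset.Icc (2:ℕ) ⌊(n:ℝ) * θ⌋₊,
          ((i:ℝ) / ((n:ℝ) + 1)) ^ (-2 + b : ℝ) *
            (|orderStat U n i ω - (i:ℝ) / ((n:ℝ) + 1)| *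
              (orderStat U n i ω - orderStat U n (i - 1) ω)) ∂P)
        ≤ C * Real.log n / min ((n:ℝ) ^ (b : ℝ)) ((n:ℝ) ^ ((1:ℝ)/2))) ∧
    ∀ ε > 0, Tendsto (fun n : ℕ =>
      P {ω | ε < |∑ i ∈ Finset.Icc (2:ℕ) ⌊(n:ℝ) * θ⌋₊,
          ((i:ℝ) / ((n:ℝ) + 1)) ^ (-2 + b : ℝ) *
            (|orderStat U n i ω - (i:ℝ) / ((n:ℝ) + 1)| *
              (orderStat U n i ω - orderStat U n (i - 1) ω))|})
      atTop (nhds 0) := by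
  obtain ⟨hθ0, hθ1⟩ := hθ
  set K : ℝ := 1 + 1 / (1 - θ) with hK
  have h1θ : 0 < 1 - θ := by linarith
  have hK0 : 0 < K := by positivity
  have hdom := fun n hn => exists_dom P U hUmeas hUindep hUunif θ b hθ0 hθ1 hb n hn
  refine ⟨⟨K, hK0, fun n hn => ?_⟩, fun ε hε => ?_⟩
  · obtain ⟨G, hGm, hGi, hGd⟩ := hdom n hn
    have hlog : 0 ≤ Real.log n := Real.log_natCast_nonneg n
    have hR : 0 ≤ K * Real.log n / min ((n:ℝ) ^ (b : ℝ)) ((n:ℝ) ^ ((1:ℝ)/2)) := by positivity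
    refine (le_abs_self _).trans ?_
    rw [← Real.norm_eq_abs]
    refine (norm_integral_le_lintegral_norm _).trans ?_
    apply ENNReal.toReal_le_of_le_ofReal hR
    refine (lintegral_mono_ae ?_).trans hGi
    filter_upwards [hGd] with ω hω
    rw [Real.norm_eq_abs]; exact hω
  · have hlim : Tendsto (fun n : ℕ => K * Real.log n / min ((n:ℝ) ^ (b : ℝ)) ((n:ℝ) ^ ((1:ℝ)/2)))
        atTop (nhds 0) := by
      have hmin : ∀ n : ℕ, 2 ≤ n → min ((n:ℝ) ^ (b : ℝ)) ((n:ℝ) ^ ((1:ℝ)/2))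
          = (n:ℝ) ^ (min b (1/2)) := by
        intro n hn
        have hn1 : (1:ℝ) ≤ n := by exact_mod_cast (by omega : 1 ≤ n)
        rcases le_total b (1/2) with h | h
        · rw [min_eq_left h, min_eq_left]
          exact Real.rpow_le_rpow_of_exponent_le hn1 h
        · rw [min_eq_right h, min_eq_right]
          exact Real.rpow_le_rpow_of_exponent_le hn1 h
      have h0 : Tendsto (fun x : ℝ => Real.log x / x ^ (min b (1/2))) atTop (nhds 0) :=
        (isLittleO_log_rpow_atTop (lt_min hb (by norm_num))).tendsto_div_nhds_zero
      have h1 := (h0.comp tendsto_natCast_atTop_atTop).const_mul K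
      rw [mul_zero] at h1
      refine h1.congr' ?_
      filter_upwards [eventually_ge_atTop 2] with n hn
      rw [hmin n hn]
      simp only [Function.comp_apply]
      ring
    have hlim2 : Tendsto (fun n : ℕ => ENNReal.ofReal
        (K * Real.log n / min ((n:ℝ) ^ (b : ℝ)) ((n:ℝ) ^ ((1:ℝ)/2))) / ENNReal.ofReal ε)
        atTop (nhds 0) := by
      have h := ENNReal.Tendsto.div_const (ENNReal.tendsto_ofReal hlim)
        (b := ENNReal.ofReal ε) (Or.inr (by simpa using hε))
      simpa using h
    refine tendsto_of_tendsto_of_tendsto_of_le_of_le' tendsto_const_nhds hlim2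
      (Eventually.of_forall fun _ => zero_le) ?_
    filter_upwards [eventually_ge_atTop 2] with n hn
    obtain ⟨G, hGm, hGi, hGd⟩ := hdom n hn
    calc _ ≤ P {ω | ENNReal.ofReal ε ≤ G ω} := by
          apply measure_mono_ae
          filter_upwards [hGd] with ω hω h
          exact (ENNReal.ofReal_le_ofReal (le_of_lt h)).trans hω
      _ ≤ (∫⁻ ω, G ω ∂P) / ENNReal.ofReal ε :=
          meas_ge_le_lintegral_div hGm.aemeasurable (by simpa using hε) ENNReal.ofReal_ne_top
      _ ≤ _ := by gcongr
end

section
/- Let U_1, …, U_n be independent uniform-[0,1] random variables, let G_n denote their empirical distribution function, G_n(t) := n^{−1} #{i ≤ n : U_i ≤ t}, and for a ∈ (0,1] set Γ_n(a) := sup_{t ∈ [a,1]} G_n(t)/t. Then for every α > 0, P( Γ_n(U_{1:n}) ≥ n^{α} ) → 0 as n → ∞, where U_{1:n} := min{U_1, …, U_n}. -/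
open MeasureTheory ProbabilityTheory Filter Set

/-- The empirical distribution function `G_n(t) = n⁻¹ #{i ≤ n : U_i ≤ t}`
of `U 1, …, U n`. -/
noncomputable def empDF {Ω : Type*} (U : ℕ → Ω → ℝ) (n : ℕ) (t : ℝ) (ω : Ω) : ℝ :=
  ((Finset.Icc 1 n).filter (fun i => U i ω ≤ t)).card / (n : ℝ)

/-- `Γ_n(a) = sup_{t ∈ [a,1]} G_n(t)/t`. -/
noncomputable def empRatioSup {Ω : Type*} (U : ℕ → Ω → ℝ) (n : ℕ) (a : ℝ) (ω : Ω) : ℝ :=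
  sSup ((fun t => empDF U n t ω / t) '' Icc a 1)

lemma aux_grid (q t : ℝ) (hq1 : q ≤ 1) (ht : t ≤ 1) (K : ℕ) (h : q ^ K ≤ t) :
    ∃ k ∈ Finset.range (K + 1), q ^ (k + 1) ≤ t ∧ t ≤ q ^ k := by
  induction K with
  | zero => exact ⟨0, by simp, by simp at h ⊢; linarith, by simpa using ht⟩
  | succ K ih =>
    by_cases h' : q ^ K ≤ t
    · obtain ⟨k, hk, h2⟩ := ih h'
      exact ⟨k, by simp at hk ⊢; omega, h2⟩
    · exact ⟨K, by simp, h, (not_le.mp h').le⟩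

lemma aux_orderStat {Ω : Type*} (U : ℕ → Ω → ℝ) (n : ℕ) (hn : 1 ≤ n) (ω : Ω) :
    ∃ j ∈ Finset.Icc 1 n, orderStat U n 1 ω = U j ω := by
  set l := ((Finset.Icc 1 n).val.map (fun j => U j ω)).sort (· ≤ ·) with hl
  have hlen : 0 < l.length := by
    rw [hl, Multiset.length_sort]; simp; omega
  have h1 : orderStat U n 1 ω = l[0] := by
    unfold orderStat
    rw [← hl, List.getD_eq_getElem _ _ (by simpa using hlen)]
  have h2 : l[0] ∈ l := List.getElem_mem _
  rw [← h1] at h2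
  rw [hl, Multiset.mem_sort, Multiset.mem_map] at h2
  obtain ⟨j, hj, h3⟩ := h2
  exact ⟨j, hj, h3.symm⟩

lemma aux_unif {Ω : Type*} [MeasurableSpace Ω] (P : Measure Ω)
    (X : Ω → ℝ) (hX : Measurable X)
    (hunif : Measure.map X P = volume.restrict (Icc (0:ℝ) 1)) (t : ℝ) :
    P {ω | X ω ≤ t} ≤ ENNReal.ofReal t := by
  have h : P {ω | X ω ≤ t} = Measure.map X P (Iic t) := by
    rw [Measure.map_apply hX measurableSet_Iic]; rfl
  rw [h, hunif, Measure.restrict_apply measurableSet_Iic]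
  calc volume (Iic t ∩ Icc 0 1) ≤ volume (Icc (0:ℝ) t) :=
        measure_mono (fun x hx => ⟨hx.2.1, hx.1⟩)
    _ = ENNReal.ofReal t := by simp

lemma aux_markov {Ω : Type*} [MeasurableSpace Ω] (P : Measure Ω)
    (U : ℕ → Ω → ℝ)
    (hUmeas : ∀ i, Measurable (U i))
    (hUunif : ∀ i, Measure.map (U i) P = volume.restrict (Icc (0:ℝ) 1))
    (n : ℕ) (hn : 1 ≤ n) (t c : ℝ) (hc : 0 < c) :
    P {ω | c ≤ empDF U n t ω} ≤ ENNReal.ofReal (t / c) := by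
  have hn0 : (0:ℝ) < n := by exact_mod_cast hn
  have hS : ∀ i, MeasurableSet {ω | U i ω ≤ t} := fun i => measurableSet_le (hUmeas i) measurable_const
  let f : Ω → ENNReal := fun ω => ∑ i ∈ Finset.Icc 1 n, ({ω | U i ω ≤ t}).indicator 1 ω
  have hfm : Measurable f :=
    Finset.measurable_sum _ (fun i _ => measurable_one.indicator (hS i))
  have hf : ∀ ω, f ω = (((Finset.Icc 1 n).filter (fun i => U i ω ≤ t)).card : ENNReal) := by
    intro ω
    simp [f, Set.indicator_apply, Finset.sum_ite]
  have hint : ∫⁻ ω, f ω ∂P ≤ n * ENNReal.ofReal t := by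
    simp only [f]
    rw [lintegral_finsetSum _ (fun i _ => measurable_one.indicator (hS i))]
    calc _ ≤ ∑ i ∈ Finset.Icc 1 n, ENNReal.ofReal t := by
          refine Finset.sum_le_sum fun i _ => ?_
          rw [lintegral_indicator_one (hS i)]
          exact aux_unif P _ (hUmeas i) (hUunif i) t
      _ = _ := by simp
  have hsub : {ω | c ≤ empDF U n t ω} ⊆ {ω | ENNReal.ofReal (c * n) ≤ f ω} := by
    intro ω hω
    simp only [mem_ofPred_eq, empDF] at hω ⊢
    rw [hf, ← ENNReal.ofReal_natCast]
    exact ENNReal.ofReal_le_ofReal ((le_div_iff₀ hn0).mp hω)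
  have hcn : 0 < c * n := by positivity
  calc P {ω | c ≤ empDF U n t ω} ≤ P {ω | ENNReal.ofReal (c * n) ≤ f ω} := measure_mono hsub
    _ ≤ (∫⁻ ω, f ω ∂P) / ENNReal.ofReal (c * n) :=
        meas_ge_le_lintegral_div hfm.aemeasurable (by simpa using hcn) (by simp)
    _ ≤ (n * ENNReal.ofReal t) / ENNReal.ofReal (c * n) := by gcongr
    _ = ENNReal.ofReal (t / c) := by
        rw [← ENNReal.ofReal_natCast, ← ENNReal.ofReal_mul hn0.le,
          ← ENNReal.ofReal_div_of_pos hcn]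
        congr 1
        field_simp

lemma aux_bound {Ω : Type*} [MeasurableSpace Ω] (P : Measure Ω)
    (U : ℕ → Ω → ℝ)
    (hUmeas : ∀ i, Measurable (U i))
    (hUunif : ∀ i, Measure.map (U i) P = volume.restrict (Icc (0:ℝ) 1))
    (n : ℕ) (hn : 1 ≤ n) (q x : ℝ) (hq : 0 < q) (hq1 : q ≤ 1) (hx : 0 < x) (K : ℕ) :
    P {ω | x ≤ empRatioSup U n (orderStat U n 1 ω) ω} ≤
      ENNReal.ofReal ((K + 1) * (2 / (q * x)) + n * q ^ K) := by
  have hsub : {ω | x ≤ empRatioSup U n (orderStat U n 1 ω) ω} ⊆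
      (⋃ k ∈ Finset.range (K + 1), {ω | q ^ (k + 1) * (x / 2) ≤ empDF U n (q ^ k) ω}) ∪
      (⋃ i ∈ Finset.Icc 1 n, {ω | U i ω ≤ q ^ K}) := by
    intro ω hω
    by_contra hcon
    simp only [mem_union, mem_iUnion, mem_ofPred_eq, not_or, not_exists, not_le] at hcon hω
    obtain ⟨h1, h2⟩ := hcon
    have h3 : empRatioSup U n (orderStat U n 1 ω) ω ≤ x / 2 := by
      refine Real.sSup_le ?_ (by positivity)
      rintro _ ⟨t, ⟨hta, ht1⟩, rfl⟩
      obtain ⟨j, hj, hjo⟩ := aux_orderStat U n hn ω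
      have htK : q ^ K ≤ t := by
        have := h2 j hj
        linarith
      have ht0 : 0 < t := lt_of_lt_of_le (by positivity) htK
      obtain ⟨k, hk, hk1, hk2⟩ := aux_grid q t hq1 ht1 K htK
      have h4 := h1 k hk
      have hmono : empDF U n t ω ≤ empDF U n (q ^ k) ω := by
        unfold empDF
        gcongr
      show empDF U n t ω / t ≤ x / 2
      rw [div_le_iff₀ ht0]
      have : q ^ (k + 1) * (x / 2) ≤ t * (x / 2) := by gcongr
      linarith
    linarith
  refine (measure_mono hsub).trans ((measure_union_le _ _).trans ?_)
  rw [ENNReal.ofReal_add (by positivity) (by positivity)]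
  refine add_le_add ?_ ?_
  · refine (measure_biUnion_finset_le _ _).trans ?_
    calc _ ≤ ∑ k ∈ Finset.range (K + 1), ENNReal.ofReal (2 / (q * x)) := by
          refine Finset.sum_le_sum fun k _ => ?_
          refine (aux_markov P U hUmeas hUunif n hn _ _ (by positivity)).trans_eq ?_
          congr 1
          rw [pow_succ]
          field_simp
      _ = _ := by
          rw [ENNReal.ofReal_mul (by positivity)]
          simp [ENNReal.ofReal_add]
  · refine (measure_biUnion_finset_le _ _).trans ?_
    calc _ ≤ ∑ i ∈ Finset.Icc 1 n, ENNReal.ofReal (q ^ K) :=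
          Finset.sum_le_sum fun i _ => aux_unif P _ (hUmeas i) (hUunif i) _
      _ = _ := by
          rw [ENNReal.ofReal_mul (by positivity)]
          simp

/-- For iid uniform-[0,1] random variables, `P(Γ_n(U_{1:n}) ≥ n^α) → 0` for every
`α > 0`, where `U_{1:n} = min(U_1, …, U_n)`. -/
theorem empRatioSup_at_min_tendsto_zero
    {Ω : Type*} [MeasurableSpace Ω] (P : Measure Ω) [IsProbabilityMeasure P]
    (U : ℕ → Ω → ℝ)
    (hUmeas : ∀ i, Measurable (U i))
    (hUindep : iIndepFun U P)
    (hUunif : ∀ i, Measure.map (U i) P = volume.restrict (Icc (0:ℝ) 1)) :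
    ∀ α : ℝ, 0 < α →
      Tendsto (fun n : ℕ =>
        P {ω | (n:ℝ) ^ (α : ℝ) ≤ empRatioSup U n (orderStat U n 1 ω) ω})
        atTop (nhds 0) := by
  intro α hα
  obtain ⟨K, hK⟩ := exists_nat_ge (4 / α)
  have hKα : 2 ≤ α / 2 * K := by
    rw [div_le_iff₀ hα] at hK; linarith
  have hlim : Tendsto (fun n : ℕ => ENNReal.ofReal
      ((K + 1) * (2 * (n:ℝ) ^ (-(α / 2))) + (n:ℝ) ^ (-(1:ℝ)))) atTop (nhds 0) := by
    have h1 := (tendsto_rpow_neg_atTop (y := α / 2) (by positivity)).comp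
      (tendsto_natCast_atTop_atTop (R := ℝ))
    have h2 := (tendsto_rpow_neg_atTop (y := 1) (by positivity)).comp
      (tendsto_natCast_atTop_atTop (R := ℝ))
    have h3 := ((h1.const_mul 2).const_mul ((K:ℝ) + 1)).add h2
    have h4 := ENNReal.tendsto_ofReal h3
    simpa using h4
  refine tendsto_of_tendsto_of_tendsto_of_le_of_le' tendsto_const_nhds hlim
    (Eventually.of_forall fun _ => zero_le) ?_
  filter_upwards [eventually_ge_atTop 1] with n hn
  have hn1 : (1:ℝ) ≤ n := by exact_mod_cast hn
  have hn0 : (0:ℝ) < n := by linarith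
  refine (aux_bound P U hUmeas hUunif n hn ((n:ℝ) ^ (-(α / 2))) ((n:ℝ) ^ α) (by positivity)
    (Real.rpow_le_one_of_one_le_of_nonpos hn1 (by linarith)) (by positivity) K).trans ?_
  apply ENNReal.ofReal_le_ofReal
  have e1 : 2 / ((n:ℝ) ^ (-(α / 2)) * (n:ℝ) ^ α) = 2 * (n:ℝ) ^ (-(α / 2)) := by
    rw [← Real.rpow_add hn0, div_eq_mul_inv, ← Real.rpow_neg hn0.le]
    ring_nf
  have e2 : (n:ℝ) * ((n:ℝ) ^ (-(α / 2))) ^ K ≤ (n:ℝ) ^ (-(1:ℝ)) := by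
    rw [← Real.rpow_natCast, ← Real.rpow_mul hn0.le]
    nth_rewrite 1 [← Real.rpow_one (n:ℝ)]
    rw [← Real.rpow_add hn0]
    exact Real.rpow_le_rpow_of_exponent_le hn1 (by linarith)
  rw [e1]
  linarith
end

section
/- Let (X,Y) be a random pair with E[Y²] < ∞ and with continuous marginal cdf F of X, let (X_1,Y_1), …, (X_n,Y_n) be independent copies of (X,Y), and set A_n := n^{−1/2} Σ_{i=2}^n (Y_{i,n} − Y_{i−1,n})₊ and B_n := n^{−1/2} Σ_{i=2}^n |Y_{i,n} − Y_{i−1,n}|. Then A_n − E(A_n | X_1,…,X_n) = O_P(1) and B_n − E(B_n | X_1,…,X_n) = O_P(1) as n → ∞. -/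
open MeasureTheory ProbabilityTheory Filter Set

/-- `Aₙ = n^{−1/2} Σ_{i=2}^n (Y_{i,n} − Y_{i−1,n})₊`. -/
noncomputable def Aseq {Ω : Type*} (X Y : ℕ → Ω → ℝ) (n : ℕ) (ω : Ω) : ℝ :=
  (∑ i ∈ Finset.Icc 2 n,
    max (concomitant X Y n i ω - concomitant X Y n (i - 1) ω) 0) / Real.sqrt n

/-- `Bₙ = n^{−1/2} Σ_{i=2}^n |Y_{i,n} − Y_{i−1,n}|`. -/
noncomputable def Bseq {Ω : Type*} (X Y : ℕ → Ω → ℝ) (n : ℕ) (ω : Ω) : ℝ :=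
  (∑ i ∈ Finset.Icc 2 n,
    |concomitant X Y n i ω - concomitant X Y n (i - 1) ω|) / Real.sqrt n

/-- The σ-field generated by `X 1, …, X n`. -/
noncomputable def sigmaX {Ω : Type*} (X : ℕ → Ω → ℝ) (n : ℕ) : MeasurableSpace Ω :=
  ⨆ i ∈ Finset.Icc 1 n, MeasurableSpace.comap (X i) inferInstance

open scoped ENNReal

theorem fiber_memLp (ρ : Measure ℝ) [IsProbabilityMeasure ρ]
    (hρ : ∫⁻ y, ENNReal.ofReal (y ^ 2) ∂ρ < ∞) : MemLp (fun y : ℝ => y) 2 ρ := by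
  refine (memLp_two_iff_integrable_sq measurable_id.aestronglyMeasurable).2 ?_
  refine ⟨by fun_prop, ?_⟩
  change HasFiniteIntegral (fun y : ℝ => y ^ 2) ρ
  rw [hasFiniteIntegral_iff_ofReal (Eventually.of_forall fun y => sq_nonneg y)]
  exact hρ

theorem fiber_memLp_h (ρ : Measure ℝ) [IsProbabilityMeasure ρ]
    (hρ : ∫⁻ y, ENNReal.ofReal (y ^ 2) ∂ρ < ∞) (h : ℝ → ℝ) (hm : Measurable h) (h0 : ℝ)
    (hl : ∀ y, |h y - h0| ≤ 2 * |y|) : MemLp (fun y => h y - h0) 2 ρ := by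
  refine MemLp.of_le_mul (c := 2) (fiber_memLp ρ hρ) (by fun_prop) (Eventually.of_forall fun y => ?_)
  simpa using hl y

theorem fiber_bound (ρ : Measure ℝ) [IsProbabilityMeasure ρ]
    (hρ : ∫⁻ y, ENNReal.ofReal (y ^ 2) ∂ρ < ∞) (h : ℝ → ℝ) (hm : Measurable h) (h0 c : ℝ)
    (hl : ∀ y, |h y - h0| ≤ 2 * |y|) :
    ∫⁻ y, ENNReal.ofReal ((h y - c) ^ 2) ∂ρ ≤
      4 * ∫⁻ y, ENNReal.ofReal (y ^ 2) ∂ρ + ENNReal.ofReal ((∫ y, h y ∂ρ - c) ^ 2) := by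
  have h1 := fiber_memLp_h ρ hρ h hm h0 hl
  have hi : Integrable (fun y => h y - h0) ρ := h1.integrable (by norm_num)
  have hi2 : Integrable (fun y => (h y - h0) ^ 2) ρ := h1.integrable_sq
  have hy2 : Integrable (fun y : ℝ => y ^ 2) ρ := (fiber_memLp ρ hρ).integrable_sq
  have hih : Integrable h ρ := by
    have := hi.add (integrable_const h0)
    refine this.congr (Eventually.of_forall fun y => ?_)
    simp
  have hm0 : ∫ y, (h y - h0) ∂ρ = ∫ y, h y ∂ρ - h0 := by
    rw [integral_sub hih (integrable_const _)]; simp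
  have hexp : (fun y => (h y - c) ^ 2) =
      fun y => (h y - h0) ^ 2 + (2 * (h0 - c)) * (h y - h0) + (h0 - c) ^ 2 := by
    funext y; ring
  have hic : Integrable (fun y => (h y - c) ^ 2) ρ := by
    rw [hexp]
    exact (hi2.add (hi.const_mul _)).add (integrable_const _)
  have hval : ∫ y, (h y - c) ^ 2 ∂ρ =
      ∫ y, (h y - h0) ^ 2 ∂ρ + (2 * (h0 - c)) * (∫ y, h y ∂ρ - h0) + (h0 - c) ^ 2 := by
    have hi3 : Integrable (fun y => (h y - h0) ^ 2 + (2 * (h0 - c)) * (h y - h0)) ρ :=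
      hi2.add (hi.const_mul _)
    rw [hexp, integral_add hi3 (integrable_const _),
      integral_add hi2 (hi.const_mul _), integral_const_mul, hm0]
    simp
  have hle : ∫ y, (h y - h0) ^ 2 ∂ρ ≤ 4 * ∫ y, y ^ 2 ∂ρ := by
    rw [← integral_const_mul]
    refine integral_mono hi2 (hy2.const_mul 4) fun y => ?_
    have := hl y
    have h2 : |h y - h0| ^ 2 ≤ (2 * |y|) ^ 2 := by gcongr
    rw [mul_pow, sq_abs, sq_abs] at h2
    simp only
    linarith
  rw [← ofReal_integral_eq_lintegral_ofReal hic (Eventually.of_forall fun y => sq_nonneg _),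
    ← ofReal_integral_eq_lintegral_ofReal hy2 (Eventually.of_forall fun y => sq_nonneg _)]
  rw [show (4 : ℝ≥0∞) = ENNReal.ofReal 4 by norm_num, ← ENNReal.ofReal_mul (by norm_num),
    ← ENNReal.ofReal_add (by positivity) (by positivity)]
  apply ENNReal.ofReal_le_ofReal
  rw [hval]
  nlinarith [sq_nonneg (∫ y, h y ∂ρ - h0)]

theorem core_bound (ν : Measure ℝ) [IsProbabilityMeasure ν] (κ : Kernel ℝ ℝ) [IsMarkovKernel κ]
    (hκ : ∀ x, ∫⁻ y, ENNReal.ofReal (y ^ 2) ∂κ x < ∞) (n : ℕ) :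
    ∀ (Θ : Type) [MeasurableSpace Θ] (f : Θ → (Fin n → ℝ × ℝ) → ℝ)
      (_ : Measurable (fun q : Θ × (Fin n → ℝ × ℝ) => f q.1 q.2))
      (_ : ∀ θ z k, |f θ z - f θ (Function.update z k ((z k).1, 0))| ≤ 2 * |(z k).2|),
      ∃ g : Θ → (Fin n → ℝ) → ℝ, Measurable (fun q : Θ × (Fin n → ℝ) => g q.1 q.2) ∧
        ∀ θ, ∫⁻ z, ENNReal.ofReal ((f θ z - g θ (fun j => (z j).1)) ^ 2)
            ∂(Measure.pi fun _ : Fin n => ν ⊗ₘ κ) ≤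
          n * (4 * ∫⁻ p, ENNReal.ofReal (p.2 ^ 2) ∂(ν ⊗ₘ κ)) := by
  induction n with
  | zero =>
    intro Θ _ f hf _
    refine ⟨fun θ _ => f θ (fun j => j.elim0), ?_, fun θ => ?_⟩
    · exact hf.comp (measurable_fst.prodMk measurable_const)
    · have : ∀ z : Fin 0 → ℝ × ℝ, z = fun j => j.elim0 := fun z => Subsingleton.elim _ _
      simp only [this]
      simp
  | succ n ih =>
    intro Θ _ f hf hlip
    have hcons : Measurable (fun w : (ℝ × ℝ) × (Fin n → ℝ × ℝ) =>
        (Fin.cons w.1 w.2 : Fin (n + 1) → ℝ × ℝ)) := by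
      refine measurable_pi_iff.2 fun j => ?_
      refine Fin.cases ?_ (fun j => ?_) j
      · simpa using measurable_fst
      · simpa using! (measurable_pi_apply j).comp measurable_snd
    have hfc : Measurable (fun q : Θ × ((ℝ × ℝ) × (Fin n → ℝ × ℝ)) =>
        f q.1 (Fin.cons q.2.1 q.2.2)) :=
      hf.comp (measurable_fst.prodMk (hcons.comp measurable_snd))
    let f1 : Θ × ℝ → (Fin n → ℝ × ℝ) → ℝ := fun t z =>
      ∫ y, f t.1 (Fin.cons (t.2, y) z) ∂κ t.2
    have hf1 : Measurable (fun q : (Θ × ℝ) × (Fin n → ℝ × ℝ) => f1 q.1 q.2) := by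
      have hk : Measurable (fun q : (Θ × ℝ) × (Fin n → ℝ × ℝ) => q.1.2) := by fun_prop
      have : StronglyMeasurable (fun q : ((Θ × ℝ) × (Fin n → ℝ × ℝ)) × ℝ =>
          f q.1.1.1 (Fin.cons (q.1.1.2, q.2) q.1.2)) := by
        apply Measurable.stronglyMeasurable
        exact hfc.comp (g := fun q : Θ × ((ℝ × ℝ) × (Fin n → ℝ × ℝ)) =>
          f q.1 (Fin.cons q.2.1 q.2.2))
          (f := fun q : ((Θ × ℝ) × (Fin n → ℝ × ℝ)) × ℝ => (q.1.1.1, ((q.1.1.2, q.2), q.1.2)))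
          (by fun_prop)
      have := this.integral_kernel_prod_right' (κ := κ.comap _ hk)
      simpa [f1, Kernel.comap_apply] using this.measurable
    have hmy : ∀ θ x z, Measurable (fun y => f θ (Fin.cons (x, y) z)) := fun θ x z =>
      hfc.comp (g := fun q : Θ × ((ℝ × ℝ) × (Fin n → ℝ × ℝ)) =>
          f q.1 (Fin.cons q.2.1 q.2.2)) (f := fun y : ℝ => (θ, ((x, y), z))) (by fun_prop)
    have hly : ∀ θ x z y, |f θ (Fin.cons (x, y) z) - f θ (Fin.cons (x, 0) z)| ≤ 2 * |y| := by
      intro θ x z y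
      have := hlip θ (Fin.cons (x, y) z) 0
      simpa using this
    have hint : ∀ θ x z, Integrable (fun y => f θ (Fin.cons (x, y) z)) (κ x) := by
      intro θ x z
      have h1 := (fiber_memLp_h (κ x) (hκ x) _ (hmy θ x z) _ (hly θ x z)).integrable (by norm_num)
      have := h1.add (integrable_const (f θ (Fin.cons (x, 0) z)))
      refine this.congr (Eventually.of_forall fun y => ?_)
      simp
    have hlip1 : ∀ t z k, |f1 t z - f1 t (Function.update z k ((z k).1, 0))| ≤ 2 * |(z k).2| := by
      intro t z k
      simp only [f1]
      rw [← integral_sub (hint _ _ _) (hint _ _ _)]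
      have key : ∀ y, ‖f t.1 (Fin.cons (t.2, y) z) -
          f t.1 (Fin.cons (t.2, y) (Function.update z k ((z k).1, 0)))‖ ≤ 2 * |(z k).2| := by
        intro y
        have := hlip t.1 (Fin.cons (t.2, y) z) k.succ
        rw [Fin.cons_update]
        simpa using this
      have := norm_integral_le_of_norm_le_const (μ := κ t.2) (Eventually.of_forall key)
      simpa using this
    obtain ⟨g1, hg1, hg1b⟩ := ih (Θ × ℝ) f1 hf1 hlip1
    refine ⟨fun θ xs => g1 (θ, xs 0) (fun j => xs j.succ), ?_, fun θ => ?_⟩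
    · exact hg1.comp (g := fun q : (Θ × ℝ) × (Fin n → ℝ) => g1 q.1 q.2)
        (f := fun q : Θ × (Fin (n + 1) → ℝ) => ((q.1, q.2 0), fun j => q.2 j.succ)) (by fun_prop)
    · set μ := ν ⊗ₘ κ with hμ
      set V := ∫⁻ p, ENNReal.ofReal (p.2 ^ 2) ∂μ with hV
      have hVx : V = ∫⁻ x, ∫⁻ y, ENNReal.ofReal (y ^ 2) ∂κ x ∂ν :=
        Measure.lintegral_compProd (by fun_prop)
      let G : (ℝ × ℝ) × (Fin n → ℝ × ℝ) → ℝ≥0∞ := fun w =>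
        ENNReal.ofReal ((f θ (Fin.cons w.1 w.2) - g1 (θ, w.1.1) (fun j => (w.2 j).1)) ^ 2)
      have hG : Measurable G := by
        have a1 : Measurable (fun w : (ℝ × ℝ) × (Fin n → ℝ × ℝ) => f θ (Fin.cons w.1 w.2)) :=
          hfc.comp (measurable_const.prodMk measurable_id)
        have a2 : Measurable (fun w : (ℝ × ℝ) × (Fin n → ℝ × ℝ) =>
            g1 (θ, w.1.1) (fun j => (w.2 j).1)) :=
          hg1.comp (g := fun q : (Θ × ℝ) × (Fin n → ℝ) => g1 q.1 q.2)
            (f := fun w : (ℝ × ℝ) × (Fin n → ℝ × ℝ) => ((θ, w.1.1), fun j => (w.2 j).1))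
            (by fun_prop)
        exact ((a1.sub a2).pow_const 2).ennreal_ofReal
      have hD : Measurable (fun w : ℝ × (Fin n → ℝ × ℝ) =>
          ENNReal.ofReal ((f1 (θ, w.1) w.2 - g1 (θ, w.1) (fun j => (w.2 j).1)) ^ 2)) := by
        have a1 : Measurable (fun w : ℝ × (Fin n → ℝ × ℝ) => f1 (θ, w.1) w.2) :=
          hf1.comp (g := fun q : (Θ × ℝ) × (Fin n → ℝ × ℝ) => f1 q.1 q.2)
            (f := fun w : ℝ × (Fin n → ℝ × ℝ) => ((θ, w.1), w.2)) (by fun_prop)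
        have a2 : Measurable (fun w : ℝ × (Fin n → ℝ × ℝ) => g1 (θ, w.1) (fun j => (w.2 j).1)) :=
          hg1.comp (g := fun q : (Θ × ℝ) × (Fin n → ℝ) => g1 q.1 q.2)
            (f := fun w : ℝ × (Fin n → ℝ × ℝ) => ((θ, w.1), fun j => (w.2 j).1))
            (by fun_prop)
        exact ((a1.sub a2).pow_const 2).ennreal_ofReal
      have mp := measurePreserving_piFinSuccAbove (fun _ : Fin (n + 1) => μ) 0
      have e1 : ∫⁻ z, ENNReal.ofReal ((f θ z - g1 (θ, (z 0).1) (fun j => (z j.succ).1)) ^ 2)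
            ∂(Measure.pi fun _ : Fin (n + 1) => μ) =
          ∫⁻ w, G w ∂(μ.prod (Measure.pi fun _ : Fin n => μ)) := by
        rw [← mp.lintegral_comp hG]
        refine lintegral_congr fun z => ?_
        have : (Fin.cons (z 0) (fun j : Fin n => z j.succ) : Fin (n + 1) → ℝ × ℝ) = z :=
          Fin.cons_self_tail z
        change _ = ENNReal.ofReal ((f θ (Fin.cons (z 0) (fun j : Fin n => z j.succ)) - _) ^ 2)
        rw [this]
        rfl
      rw [e1, lintegral_prod _ hG.aemeasurable, Measure.lintegral_compProd
        (Measurable.lintegral_prod_right' hG)]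
      have e2 : ∀ x, ∫⁻ y, ∫⁻ z, G ((x, y), z) ∂(Measure.pi fun _ : Fin n => μ) ∂κ x ≤
          4 * ∫⁻ y, ENNReal.ofReal (y ^ 2) ∂κ x + n * (4 * V) := by
        intro x
        rw [lintegral_lintegral_swap (f := fun y z => G ((x, y), z))
          ((hG.comp (g := G) (f := fun q : ℝ × (Fin n → ℝ × ℝ) => ((x, q.1), q.2))
            (by fun_prop)).aemeasurable)]
        calc _ ≤ ∫⁻ z, (4 * ∫⁻ y, ENNReal.ofReal (y ^ 2) ∂κ x +
              ENNReal.ofReal ((f1 (θ, x) z - g1 (θ, x) (fun j => (z j).1)) ^ 2))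
                ∂(Measure.pi fun _ : Fin n => μ) :=
              lintegral_mono fun z => fiber_bound (κ x) (hκ x) _ (hmy θ x z) _ _ (hly θ x z)
          _ ≤ _ := by
              rw [lintegral_add_left measurable_const]
              simp only [lintegral_const, measure_univ, mul_one]
              gcongr
              exact hg1b (θ, x)
      refine (lintegral_mono e2).trans ?_
      rw [lintegral_add_right _ measurable_const, lintegral_const_mul _
        (Measurable.lintegral_kernel (by fun_prop)), ← hVx]
      simp only [lintegral_const, measure_univ, mul_one]
      push_cast
      rw [add_mul, one_mul, add_comm]

theorem exists_good_kernel (μ : Measure (ℝ × ℝ)) [IsProbabilityMeasure μ]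
    (hY2 : Integrable (fun p : ℝ × ℝ => p.2 ^ 2) μ) :
    ∃ (ν : Measure ℝ) (κ : Kernel ℝ ℝ), IsProbabilityMeasure ν ∧ IsMarkovKernel κ ∧
      (∀ x, ∫⁻ y, ENNReal.ofReal (y ^ 2) ∂κ x < ∞) ∧ ν ⊗ₘ κ = μ := by
  classical
  have hfin : ∫⁻ p, ENNReal.ofReal (p.2 ^ 2) ∂μ < ∞ := by
    rw [← hasFiniteIntegral_iff_ofReal (Eventually.of_forall fun y => sq_nonneg _)]
    exact hY2.2
  have hd : μ.fst ⊗ₘ μ.condKernel = μ := Measure.disintegrate μ μ.condKernel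
  have hmk : Measurable (fun x => ∫⁻ y, ENNReal.ofReal (y ^ 2) ∂μ.condKernel x) :=
    Measurable.lintegral_kernel (by fun_prop)
  let s : Set ℝ := {x | ∫⁻ y, ENNReal.ofReal (y ^ 2) ∂μ.condKernel x < ∞}
  have hs : MeasurableSet s := measurableSet_lt hmk measurable_const
  have hae : ∀ᵐ x ∂μ.fst, x ∈ s := by
    refine ae_lt_top hmk ?_
    rw [← Measure.lintegral_compProd (f := fun p : ℝ × ℝ => ENNReal.ofReal (p.2 ^ 2))
      (by fun_prop), hd]
    exact hfin.ne
  refine ⟨μ.fst, Kernel.piecewise hs μ.condKernel (Kernel.const ℝ (Measure.dirac 0)),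
    inferInstance, inferInstance, fun x => ?_, ?_⟩
  · rw [Kernel.piecewise_apply]
    split_ifs with h
    · exact h
    · simp
  · conv_rhs => rw [← hd]
    refine Measure.compProd_congr ?_
    filter_upwards [hae] with x hx
    simp [Kernel.piecewise_apply, hx]

/-- sorted values -/
noncomputable def osx (x : ℕ → ℝ) (n i : ℕ) : ℝ :=
  (((Finset.Icc 1 n).val.map x).sort (· ≤ ·)).getD (i - 1) 0

open Classical in
/-- choose an index satisfying `p`, or `0` -/
noncomputable def pick (p : ℕ → Prop) : ℕ := if h : ∃ j, p j then h.choose else 0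

theorem pick_spec (p : ℕ → Prop) (h : ∃ j, p j) : p (pick p) := by
  unfold pick; rw [dif_pos h]; exact h.choose_spec

theorem pick_spec' (p : ℕ → Prop) (h : pick p ≠ 0) : p (pick p) := by
  apply pick_spec
  by_contra hn
  exact h (by unfold pick; rw [dif_neg hn])

/-- index of the `i`-th order statistic -/
noncomputable def cidx (x : ℕ → ℝ) (n i : ℕ) : ℕ :=
  pick (fun j => j ∈ Finset.Icc 1 n ∧ x j = osx x n i)

/-- concomitant -/
noncomputable def cval (x y : ℕ → ℝ) (n i : ℕ) : ℝ :=
  if cidx x n i = 0 then 0 else y (cidx x n i)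

/-- the unnormalised sum -/
noncomputable def Tsum (φ : ℝ → ℝ) (x y : ℕ → ℝ) (n : ℕ) : ℝ :=
  ∑ i ∈ Finset.Icc 2 n, φ (cval x y n i - cval x y n (i - 1))

theorem concomitant_eq {Ω : Type*} (X Y : ℕ → Ω → ℝ) (n i : ℕ) (ω : Ω) :
    concomitant X Y n i ω = cval (fun j => X j ω) (fun j => Y j ω) n i := by
  classical
  unfold concomitant cval
  by_cases h : ∃ j, j ∈ Finset.Icc 1 n ∧ X j ω = orderStat X n i ω
  · have h1 : cidx (fun j => X j ω) n i = h.choose := by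
      unfold cidx pick
      exact dif_pos h
    have h2 : h.choose ≠ 0 := by
      have := (Finset.mem_Icc.1 h.choose_spec.1).1
      omega
    rw [dif_pos h, h1, if_neg h2]
  · have h1 : cidx (fun j => X j ω) n i = 0 := by
      unfold cidx pick
      exact dif_neg h
    rw [dif_neg h, h1, if_pos rfl]

theorem cidx_mem {x : ℕ → ℝ} {n i : ℕ} (h : cidx x n i ≠ 0) :
    cidx x n i ∈ Finset.Icc 1 n ∧ x (cidx x n i) = osx x n i :=
  pick_spec' (fun j => j ∈ Finset.Icc 1 n ∧ x j = osx x n i) h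

theorem exists_sorted_list (x : ℕ → ℝ) (n : ℕ) :
    ∃ l : List ℕ, l.Perm (Finset.Icc 1 n).toList ∧ l.Pairwise (fun a b => x a ≤ x b) := by
  refine ⟨(Finset.Icc 1 n).toList.mergeSort (fun a b => decide (x a ≤ x b)),
    List.mergeSort_perm _ _, ?_⟩
  have := List.pairwise_mergeSort (le := fun a b => decide (x a ≤ x b)) (by
    intro a b c; simp only [decide_eq_true_eq]; exact le_trans) (by
    intro a b; simpa using le_total (x a) (x b)) (Finset.Icc 1 n).toList
  simpa using this

theorem sort_eq_map (x : ℕ → ℝ) (n : ℕ) (l : List ℕ) (hl : l.Perm (Finset.Icc 1 n).toList)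
    (hs : l.Pairwise (fun a b => x a ≤ x b)) :
    ((Finset.Icc 1 n).val.map x).sort (· ≤ ·) = l.map x := by
  refine List.Perm.eq_of_pairwise (le := (· ≤ ·)) (fun a b _ _ => le_antisymm)
    (Multiset.pairwise_sort _ _) (List.pairwise_map.2 hs) ?_
  rw [← Multiset.coe_eq_coe, Multiset.sort_eq, ← Multiset.map_coe,
    Multiset.coe_eq_coe.2 hl, Finset.coe_toList]

theorem osx_eq (x : ℕ → ℝ) (n : ℕ) (l : List ℕ) (hl : l.Perm (Finset.Icc 1 n).toList)
    (hs : l.Pairwise (fun a b => x a ≤ x b)) (i : ℕ) (hi : i - 1 < l.length) :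
    osx x n i = x l[i - 1] := by
  unfold osx
  rw [sort_eq_map x n l hl hs]
  simp [List.getD_eq_getElem?_getD, hi]

theorem len_eq {n : ℕ} {l : List ℕ} (hl : l.Perm (Finset.Icc 1 n).toList) : l.length = n := by
  rw [hl.length_eq]; simp

theorem cidx_pattern (x x' : ℕ → ℝ) (n i : ℕ) (hi : 1 ≤ i ∧ i ≤ n)
    (h : ∀ a ∈ Finset.Icc 1 n, ∀ b ∈ Finset.Icc 1 n, (x a ≤ x b ↔ x' a ≤ x' b)) :
    cidx x n i = cidx x' n i := by
  obtain ⟨l, hl, hs⟩ := exists_sorted_list x n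
  have hmem : ∀ a ∈ l, a ∈ Finset.Icc 1 n := fun a ha => by
    simpa using hl.subset ha
  have hs' : l.Pairwise (fun a b => x' a ≤ x' b) :=
    hs.imp_of_mem fun ha hb hab => (h _ (hmem _ ha) _ (hmem _ hb)).1 hab
  have hlen := len_eq hl
  have hi' : i - 1 < l.length := by omega
  unfold cidx
  congr 1
  funext j
  rw [osx_eq x n l hl hs i hi', osx_eq x' n l hl hs' i hi']
  have hm := hmem _ (List.getElem_mem hi')
  apply propext
  refine and_congr_right fun hj => ?_
  rw [le_antisymm_iff, le_antisymm_iff, h _ hj _ hm, h _ hm _ hj]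

theorem osx_mono (x : ℕ → ℝ) (n i j : ℕ) (hij : i ≤ j) (hj : 1 ≤ j ∧ j ≤ n) :
    osx x n i ≤ osx x n j := by
  obtain ⟨l, hl, hs⟩ := exists_sorted_list x n
  have hlen := len_eq hl
  rw [osx_eq x n l hl hs i (by omega), osx_eq x n l hl hs j (by omega)]
  rcases (show i - 1 < j - 1 ∨ i - 1 = j - 1 by omega) with h | h
  · exact List.pairwise_iff_getElem.1 hs _ _ _ _ h
  · simp [h]

theorem cidx_conn (x : ℕ → ℝ) (n k a b c : ℕ) (hk : k ≠ 0) (hab : a ≤ b) (hbc : b ≤ c)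
    (ha : 1 ≤ a) (hc : c ≤ n) (h1 : cidx x n a = k) (h2 : cidx x n c = k) : cidx x n b = k := by
  have e1 := (cidx_mem (x := x) (n := n) (i := a) (by rw [h1]; exact hk)).2
  have e2 := (cidx_mem (x := x) (n := n) (i := c) (by rw [h2]; exact hk)).2
  have m1 := osx_mono x n a b hab ⟨by omega, by omega⟩
  have m2 := osx_mono x n b c hbc ⟨by omega, by omega⟩
  rw [h1] at e1
  rw [h2] at e2
  have : osx x n b = osx x n a := le_antisymm (by rw [← e1, e2]; exact m2) m1
  rw [← h1]
  unfold cidx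
  rw [this]

open Classical in
theorem cval_update (x y : ℕ → ℝ) (n k i : ℕ) (hk : k ≠ 0) :
    cval x y n i - cval x (Function.update y k 0) n i =
      (if cidx x n i = k then 1 else 0) * y k := by
  unfold cval
  by_cases h0 : cidx x n i = 0
  · simp [h0, hk.symm]
  · by_cases h : cidx x n i = k
    · simp [h, hk]
    · simp [h, h0]

theorem Tsum_lip (φ : ℝ → ℝ) (hφ : ∀ a b, |φ a - φ b| ≤ |a - b|) (x y : ℕ → ℝ) (n k : ℕ)
    (hk : k ≠ 0) : |Tsum φ x y n - Tsum φ x (Function.update y k 0) n| ≤ 2 * |y k| := by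
  classical
  unfold Tsum
  rw [← Finset.sum_sub_distrib]
  refine (Finset.abs_sum_le_sum_abs _ _).trans ?_
  have hterm : ∀ i ∈ Finset.Icc 2 n,
      |φ (cval x y n i - cval x y n (i - 1)) -
        φ (cval x (Function.update y k 0) n i - cval x (Function.update y k 0) n (i - 1))| ≤
      ((if cidx x n i = k ∧ cidx x n (i - 1) ≠ k then (1 : ℝ) else 0) +
        (if cidx x n i ≠ k ∧ cidx x n (i - 1) = k then (1 : ℝ) else 0)) * |y k| := by
    intro i _
    refine (hφ _ _).trans ?_
    have e : cval x y n i - cval x y n (i - 1) -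
        (cval x (Function.update y k 0) n i - cval x (Function.update y k 0) n (i - 1)) =
        ((if cidx x n i = k then (1 : ℝ) else 0) - (if cidx x n (i - 1) = k then 1 else 0)) * y k := by
      rw [sub_mul, ← cval_update x y n k i hk, ← cval_update x y n k (i - 1) hk]; ring
    rw [e, abs_mul]
    gcongr
    by_cases h1 : cidx x n i = k <;> by_cases h2 : cidx x n (i - 1) = k <;> simp [h1, h2]
  refine (Finset.sum_le_sum hterm).trans ?_
  rw [← Finset.sum_mul, Finset.sum_add_distrib, Finset.sum_boole, Finset.sum_boole]
  gcongr
  have c1 : (Finset.filter (fun i => cidx x n i = k ∧ cidx x n (i - 1) ≠ k)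
      (Finset.Icc 2 n)).card ≤ 1 := by
    rw [Finset.card_le_one]
    have aux : ∀ a b, a ∈ Finset.Icc 2 n → b ∈ Finset.Icc 2 n → cidx x n a = k →
        cidx x n b = k → cidx x n (b - 1) ≠ k → ¬ a < b := by
      intro a b ha hb h1 h2 h3 hlt
      rw [Finset.mem_Icc] at ha hb
      exact h3 (cidx_conn x n k a (b - 1) b hk (by omega) (by omega) (by omega) (by omega) h1 h2)
    intro a ha b hb
    rw [Finset.mem_filter] at ha hb
    have := aux a b ha.1 hb.1 ha.2.1 hb.2.1 hb.2.2
    have := aux b a hb.1 ha.1 hb.2.1 ha.2.1 ha.2.2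
    omega
  have c2 : (Finset.filter (fun i => cidx x n i ≠ k ∧ cidx x n (i - 1) = k)
      (Finset.Icc 2 n)).card ≤ 1 := by
    rw [Finset.card_le_one]
    have aux : ∀ a b, a ∈ Finset.Icc 2 n → b ∈ Finset.Icc 2 n → cidx x n (a - 1) = k →
        cidx x n (b - 1) = k → cidx x n a ≠ k → ¬ a < b := by
      intro a b ha hb h1 h2 h3 hlt
      rw [Finset.mem_Icc] at ha hb
      exact h3 (cidx_conn x n k (a - 1) a (b - 1) hk (by omega) (by omega) (by omega)
        (by omega) h1 h2)
    intro a ha b hb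
    rw [Finset.mem_filter] at ha hb
    have := aux a b ha.1 hb.1 ha.2.2 hb.2.2 ha.2.1
    have := aux b a hb.1 ha.1 hb.2.2 ha.2.2 hb.2.1
    omega
  have c1' : ((Finset.filter (fun i => cidx x n i = k ∧ cidx x n (i - 1) ≠ k)
      (Finset.Icc 2 n)).card : ℝ) ≤ 1 := by exact_mod_cast c1
  have c2' : ((Finset.filter (fun i => cidx x n i ≠ k ∧ cidx x n (i - 1) = k)
      (Finset.Icc 2 n)).card : ℝ) ≤ 1 := by exact_mod_cast c2
  linarith

theorem cval_abs_le (x y : ℕ → ℝ) (n i : ℕ) : |cval x y n i| ≤ ∑ j ∈ Finset.Icc 1 n, |y j| := by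
  unfold cval
  split_ifs with h
  · simpa using Finset.sum_nonneg fun j _ => abs_nonneg (y j)
  · exact Finset.single_le_sum (f := fun j => |y j|) (fun j _ => abs_nonneg _) (cidx_mem h).1

theorem Tsum_abs_le (φ : ℝ → ℝ) (hφ : ∀ a b, |φ a - φ b| ≤ |a - b|) (hφ0 : φ 0 = 0)
    (x y : ℕ → ℝ) (n : ℕ) :
    |Tsum φ x y n| ≤ (Finset.Icc 2 n).card * (2 * ∑ j ∈ Finset.Icc 1 n, |y j|) := by
  unfold Tsum
  refine (Finset.abs_sum_le_sum_abs _ _).trans ?_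
  rw [← nsmul_eq_mul]
  refine Finset.sum_le_card_nsmul _ _ _ fun i _ => ?_
  have h1 := hφ (cval x y n i - cval x y n (i - 1)) 0
  rw [hφ0, sub_zero, sub_zero] at h1
  have h2 := abs_sub (cval x y n i) (cval x y n (i - 1))
  have h3 := cval_abs_le x y n i
  have h4 := cval_abs_le x y n (i - 1)
  linarith

theorem Tsum_congr (φ : ℝ → ℝ) (x y x' y' : ℕ → ℝ) (n : ℕ)
    (hx : ∀ j ∈ Finset.Icc 1 n, x j = x' j) (hy : ∀ j ∈ Finset.Icc 1 n, y j = y' j) :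
    Tsum φ x y n = Tsum φ x' y' n := by
  have hc : ∀ i, cidx x n i = cidx x' n i := by
    intro i
    have ho : osx x n i = osx x' n i := by
      unfold osx
      rw [Multiset.map_congr rfl (g := x') hx]
    unfold cidx
    congr 1
    funext j
    apply propext
    refine and_congr_right fun hj => ?_
    rw [ho, hx j hj]
  have hv : ∀ i, cval x y n i = cval x' y' n i := by
    intro i
    unfold cval
    rw [← hc i]
    split_ifs with h
    · rfl
    · exact hy _ (cidx_mem h).1
  unfold Tsum
  simp only [hv]

theorem cidx_measurable {Ω : Type*} [MeasurableSpace Ω] (X : ℕ → Ω → ℝ)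
    (hX : ∀ j, Measurable (X j)) (n i : ℕ) (hi : 1 ≤ i ∧ i ≤ n) :
    Measurable (fun ω => cidx (fun j => X j ω) n i) := by
  classical
  let R : Ω → Finset (ℕ × ℕ) := fun ω =>
    (Finset.Icc 1 n ×ˢ Finset.Icc 1 n).filter (fun p => X p.1 ω ≤ X p.2 ω)
  let _ : MeasurableSpace (Finset (ℕ × ℕ)) := ⊤
  have hR : Measurable R := by
    refine measurable_to_countable' fun t => ?_
    have : R ⁻¹' {t} = ⋂ p : ℕ × ℕ, {ω | p ∈ R ω ↔ p ∈ t} := by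
      ext ω
      simp only [mem_preimage, mem_singleton_iff, mem_iInter, mem_setOf_eq]
      exact Finset.ext_iff
    rw [this]
    refine MeasurableSet.iInter fun p => ?_
    have hp : MeasurableSet {ω | p ∈ R ω} := by
      by_cases hq : p ∈ Finset.Icc 1 n ×ˢ Finset.Icc 1 n
      · have : {ω | p ∈ R ω} = {ω | X p.1 ω ≤ X p.2 ω} := by
          ext ω; simp only [R, mem_setOf_eq, Finset.mem_filter, hq, true_and]
        rw [this]
        exact measurableSet_le (hX _) (hX _)
      · have : {ω | p ∈ R ω} = ∅ := by
          ext ω; simp only [R, mem_setOf_eq, Finset.mem_filter, hq, false_and, mem_empty_iff_false]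
        rw [this]
        exact MeasurableSet.empty
    by_cases ht : p ∈ t
    · simpa only [ht, iff_true] using hp
    · simpa only [ht, iff_false] using! hp.compl
  have hfac : Function.FactorsThrough (fun ω => cidx (fun j => X j ω) n i) R := by
    intro ω ω' hωω
    refine cidx_pattern _ _ n i hi fun a ha b hb => ?_
    have := Finset.ext_iff.1 hωω (a, b)
    have hm : (a, b) ∈ Finset.Icc 1 n ×ˢ Finset.Icc 1 n := Finset.mem_product.2 ⟨ha, hb⟩
    simpa only [R, Finset.mem_filter, hm, true_and] using this
  have heq : (fun ω => cidx (fun j => X j ω) n i) =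
      (Function.extend R (fun ω => cidx (fun j => X j ω) n i) (fun _ => 0)) ∘ R := by
    funext ω
    exact (hfac.extend_apply _ ω).symm
  rw [heq]
  exact measurable_from_top.comp hR

theorem cval_measurable {Ω : Type*} [MeasurableSpace Ω] (X Y : ℕ → Ω → ℝ)
    (hX : ∀ j, Measurable (X j)) (hY : ∀ j, Measurable (Y j)) (n i : ℕ) (hi : 1 ≤ i ∧ i ≤ n) :
    Measurable (fun ω => cval (fun j => X j ω) (fun j => Y j ω) n i) := by
  have hc := cidx_measurable X hX n i hi
  have h1 : Measurable (fun q : ℕ × Ω => if q.1 = 0 then (0 : ℝ) else Y q.1 q.2) := by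
    refine measurable_from_prod_countable_right fun j => ?_
    by_cases hj : j = 0
    · simp [hj]
    · simpa [hj] using hY j
  exact h1.comp (hc.prodMk measurable_id)

theorem Tsum_measurable {Ω : Type*} [MeasurableSpace Ω] (φ : ℝ → ℝ) (hφ : Measurable φ)
    (X Y : ℕ → Ω → ℝ)
    (hX : ∀ j, Measurable (X j)) (hY : ∀ j, Measurable (Y j)) (n : ℕ) :
    Measurable (fun ω => Tsum φ (fun j => X j ω) (fun j => Y j ω) n) := by
  unfold Tsum
  refine Finset.measurable_sum _ fun i hi => ?_
  rw [Finset.mem_Icc] at hi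
  exact hφ.comp ((cval_measurable X Y hX hY n i ⟨by omega, by omega⟩).sub
    (cval_measurable X Y hX hY n (i - 1) ⟨by omega, by omega⟩))

/-- first coordinate read-off -/
noncomputable def Xc (n : ℕ) (j : ℕ) (z : Fin n → ℝ × ℝ) : ℝ :=
  if h : 1 ≤ j ∧ j ≤ n then (z ⟨j - 1, by omega⟩).1 else 0

/-- second coordinate read-off -/
noncomputable def Yc (n : ℕ) (j : ℕ) (z : Fin n → ℝ × ℝ) : ℝ :=
  if h : 1 ≤ j ∧ j ≤ n then (z ⟨j - 1, by omega⟩).2 else 0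

theorem Xc_measurable (n j : ℕ) : Measurable (Xc n j) := by
  unfold Xc
  split_ifs with h <;> fun_prop

theorem Yc_measurable (n j : ℕ) : Measurable (Yc n j) := by
  unfold Yc
  split_ifs with h <;> fun_prop

theorem Tc_lip (φ : ℝ → ℝ) (hφ : ∀ a b, |φ a - φ b| ≤ |a - b|) (n : ℕ) (z : Fin n → ℝ × ℝ)
    (k : Fin n) :
    |Tsum φ (fun j => Xc n j z) (fun j => Yc n j z) n -
      Tsum φ (fun j => Xc n j (Function.update z k ((z k).1, 0)))
        (fun j => Yc n j (Function.update z k ((z k).1, 0))) n| ≤ 2 * |(z k).2| := by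
  have h := Tsum_lip φ hφ (fun j => Xc n j z) (fun j => Yc n j z) n (k + 1) (by omega)
  have hk : Yc n (k + 1) z = (z k).2 := by
    unfold Yc
    rw [dif_pos ⟨by omega, by omega⟩]
    simp
  rw [hk] at h
  have hX : (fun j => Xc n j (Function.update z k ((z k).1, 0))) = fun j => Xc n j z := by
    funext j
    unfold Xc
    split_ifs with hj
    · by_cases hjk : (⟨j - 1, by omega⟩ : Fin n) = k
      · rw [hjk]; simp
      · rw [Function.update_of_ne hjk]
    · rfl
  have hY : (fun j => Yc n j (Function.update z k ((z k).1, 0))) =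
      Function.update (fun j => Yc n j z) (k + 1) 0 := by
    funext j
    by_cases hjk : j = k + 1
    · subst hjk
      unfold Yc
      rw [dif_pos ⟨by omega, by omega⟩]
      simp
    · rw [Function.update_of_ne hjk]
      unfold Yc
      split_ifs with hj
      · rw [Function.update_of_ne]
        intro he
        have := congrArg Fin.val he
        simp only at this
        omega
      · rfl
  rw [hX, hY]
  exact h

theorem general_bounded
    {Ω : Type*} [MeasurableSpace Ω] (P : Measure Ω) [IsProbabilityMeasure P]
    (X Y : ℕ → Ω → ℝ) (μ : Measure (ℝ × ℝ)) [IsProbabilityMeasure μ]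
    (hmeas : ∀ i, Measurable (fun ω => (X i ω, Y i ω)))
    (hindep : iIndepFun (fun i ω => (X i ω, Y i ω)) P)
    (hlaw : ∀ i, Measure.map (fun ω => (X i ω, Y i ω)) P = μ)
    (hY2 : Integrable (fun p : ℝ × ℝ => p.2 ^ 2) μ)
    (φ : ℝ → ℝ) (hφm : Measurable φ) (hφ : ∀ a b, |φ a - φ b| ≤ |a - b|) (hφ0 : φ 0 = 0)
    (S : ℕ → Ω → ℝ)
    (hS : ∀ n ω, S n ω = Tsum φ (fun j => X j ω) (fun j => Y j ω) n / Real.sqrt n) :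
    IsBoundedInProbability P (fun n ω => S n ω - (P[S n | sigmaX X n]) ω) := by
  have hX : ∀ i, Measurable (X i) := fun i => (hmeas i).fst
  have hY : ∀ i, Measurable (Y i) := fun i => (hmeas i).snd
  obtain ⟨ν, κ, hν, hκM, hκ, hνκ⟩ := exists_good_kernel μ hY2
  set V := ∫⁻ p, ENNReal.ofReal (p.2 ^ 2) ∂μ with hV
  have hVfin : V < ∞ := by
    rw [hV, ← hasFiniteIntegral_iff_ofReal (Eventually.of_forall fun y => sq_nonneg _)]
    exact hY2.2
  set K : ℝ≥0∞ := (4 * V) ^ (1 / 2 : ℝ) with hK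
  have hKfin : K < ∞ := by
    apply ENNReal.rpow_lt_top_of_nonneg (by norm_num)
    exact (ENNReal.mul_lt_top (by norm_num) hVfin).ne
  have hYint : ∀ j, Integrable (Y j) P := by
    intro j
    have h2 : Integrable (fun ω => (Y j ω) ^ 2) P := by
      have := hlaw j ▸ hY2
      exact this.comp_measurable (hmeas j)
    exact ((memLp_two_iff_integrable_sq (hY j).aestronglyMeasurable).2 h2).integrable
      (by norm_num)
  -- main L1 bound
  have main : ∀ n, eLpNorm (fun ω => S n ω - (P[S n | sigmaX X n]) ω) 1 P ≤ 2 * K := by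
    intro n
    have hm : sigmaX X n ≤ (inferInstance : MeasurableSpace Ω) :=
      iSup₂_le fun i _ => (hX i).comap_le
    have hSm : Measurable (S n) := by
      have : S n = fun ω => Tsum φ (fun j => X j ω) (fun j => Y j ω) n / Real.sqrt n :=
        funext (hS n)
      rw [this]
      exact (Tsum_measurable φ hφm X Y hX hY n).div_const _
    have hSint : Integrable (S n) P := by
      have hb : Integrable (fun ω => ((Finset.Icc 2 n).card *
          (2 * ∑ j ∈ Finset.Icc 1 n, |Y j ω|)) / Real.sqrt n) P :=
        (((integrable_finsetSum _ fun j _ => (hYint j).abs).const_mul 2).const_mul _).div_const _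
      refine hb.mono' hSm.aestronglyMeasurable (Eventually.of_forall fun ω => ?_)
      rw [hS, Real.norm_eq_abs, abs_div, abs_of_nonneg (Real.sqrt_nonneg _)]
      gcongr
      exact Tsum_abs_le φ hφ hφ0 _ _ n
    obtain ⟨g, hg, hgb⟩ := core_bound ν κ hκ n Unit
      (fun _ z => Tsum φ (fun j => Xc n j z) (fun j => Yc n j z) n)
      ((Tsum_measurable φ hφm (Xc n) (Yc n) (Xc_measurable n) (Yc_measurable n) n).comp
        measurable_snd)
      (fun _ z k => Tc_lip φ hφ n z k)
    rw [hνκ] at hgb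
    have hgb := hgb ()
    have hg0 : Measurable (g ()) := hg.comp (measurable_const.prodMk measurable_id)
    let Zv : Ω → Fin n → ℝ × ℝ := fun ω j => (X (j + 1) ω, Y (j + 1) ω)
    have hZv : Measurable Zv := measurable_pi_iff.2 fun j => hmeas (j + 1)
    have hmap : Measure.map Zv P = Measure.pi fun _ : Fin n => μ := by
      have hi := hindep.precomp (g := fun j : Fin n => (j : ℕ) + 1) (by
        intro a b hab
        simp only [Nat.add_right_cancel_iff] at hab
        exact Fin.ext hab)
      have := (iIndepFun_iff_map_fun_eq_pi_map (fun j : Fin n =>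
        (hmeas ((j : ℕ) + 1)).aemeasurable)).1 hi
      simp only [hlaw] at this
      exact this
    let Z : Ω → ℝ := fun ω => g () (fun j : Fin n => X (j + 1) ω) / Real.sqrt n
    have hZm : Measurable[sigmaX X n] Z := by
      have hg1 : Measurable (fun v : Fin n → ℝ => g () v / Real.sqrt n) := hg0.div_const _
      refine Measurable.comp (g := fun v : Fin n → ℝ => g () v / Real.sqrt n)
        (f := fun ω => fun j : Fin n => X (j + 1) ω) hg1
        ((@measurable_pi_iff _ _ _ (sigmaX X n) _ _).2 fun j => ?_)
      have h1 : MeasurableSpace.comap (X ((j : ℕ) + 1)) inferInstance ≤ sigmaX X n :=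
        le_iSup₂_of_le ((j : ℕ) + 1) (by rw [Finset.mem_Icc]; omega) le_rfl
      exact (comap_measurable (X ((j : ℕ) + 1))).mono h1 le_rfl
    have hZm' : Measurable Z := hZm.mono hm le_rfl
    let W : Ω → ℝ := fun ω => S n ω - Z ω
    have hWm : Measurable W := hSm.sub hZm'
    have hTT : ∀ ω, Tsum φ (fun j => X j ω) (fun j => Y j ω) n =
        Tsum φ (fun j => Xc n j (Zv ω)) (fun j => Yc n j (Zv ω)) n := by
      intro ω
      refine Tsum_congr φ _ _ _ _ n (fun j hj => ?_) (fun j hj => ?_)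
      · rw [Finset.mem_Icc] at hj
        simp only [Xc, Zv, dif_pos hj, Nat.sub_add_cancel hj.1]
      · rw [Finset.mem_Icc] at hj
        simp only [Yc, Zv, dif_pos hj, Nat.sub_add_cancel hj.1]
    have hW2 : ∫⁻ ω, ENNReal.ofReal (W ω ^ 2) ∂P ≤ 4 * V := by
      have hGm : Measurable (fun z : Fin n → ℝ × ℝ => ENNReal.ofReal
          ((Tsum φ (fun j => Xc n j z) (fun j => Yc n j z) n - g () (fun j => (z j).1)) ^ 2)) := by
        have a1 := Tsum_measurable φ hφm (Xc n) (Yc n) (Xc_measurable n) (Yc_measurable n) n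
        have a2 : Measurable (fun z : Fin n → ℝ × ℝ => g () (fun j => (z j).1)) :=
          hg0.comp (by fun_prop)
        exact ((a1.sub a2).pow_const 2).ennreal_ofReal
      rw [← hmap, lintegral_map hGm hZv] at hgb
      have hWe : ∀ ω, ENNReal.ofReal (W ω ^ 2) = ENNReal.ofReal ((n : ℝ)⁻¹) *
          ENNReal.ofReal ((Tsum φ (fun j => Xc n j (Zv ω)) (fun j => Yc n j (Zv ω)) n -
            g () (fun j => (Zv ω j).1)) ^ 2) := by
        intro ω
        rw [← ENNReal.ofReal_mul (by positivity)]
        congr 1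
        simp only [W, Z]
        rw [hS, hTT, ← sub_div, div_pow, Real.sq_sqrt (Nat.cast_nonneg n), div_eq_inv_mul]
      simp only [hWe]
      have hGZ : Measurable (fun ω => ENNReal.ofReal
          ((Tsum φ (fun j => Xc n j (Zv ω)) (fun j => Yc n j (Zv ω)) n -
            g () (fun j => (Zv ω j).1)) ^ 2)) := hGm.comp hZv
      rw [lintegral_const_mul _ hGZ]
      calc _ ≤ ENNReal.ofReal ((n : ℝ)⁻¹) * (n * (4 * V)) := by gcongr
        _ = ENNReal.ofReal ((n : ℝ)⁻¹ * n) * (4 * V) := by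
            rw [← mul_assoc, ENNReal.ofReal_mul (by positivity), ENNReal.ofReal_natCast]
        _ ≤ 1 * (4 * V) := by
            gcongr
            rw [← ENNReal.ofReal_one]
            exact ENNReal.ofReal_le_ofReal inv_mul_le_one
        _ = _ := one_mul _
    have hW1 : eLpNorm W 1 P ≤ K := by
      refine (eLpNorm_le_eLpNorm_of_exponent_le (q := 2) (by norm_num)
        hWm.aestronglyMeasurable).trans ?_
      rw [eLpNorm_eq_lintegral_rpow_enorm_toReal (by norm_num) (by norm_num), hK]
      simp only [ENNReal.toReal_ofNat]
      gcongr
      refine (lintegral_congr fun ω => ?_).trans_le hW2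
      rw [← Real.enorm_of_nonneg (sq_nonneg (W ω)), enorm_pow]
      norm_cast
    have hWint : Integrable W P :=
      memLp_one_iff_integrable.1 ⟨hWm.aestronglyMeasurable, hW1.trans_lt hKfin⟩
    have hZint : Integrable Z P := by
      refine (hSint.sub hWint).congr (Eventually.of_forall fun ω => ?_)
      simp [W]
    have hcond : (fun ω => S n ω - (P[S n | sigmaX X n]) ω) =ᵐ[P] W - P[W | sigmaX X n] := by
      have h1 : P[W | sigmaX X n] =ᵐ[P] P[S n | sigmaX X n] - P[Z | sigmaX X n] :=
        condExp_sub hSint hZint _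
      have h2 : P[Z | sigmaX X n] = Z :=
        condExp_of_stronglyMeasurable hm hZm.stronglyMeasurable hZint
      rw [h2] at h1
      filter_upwards [h1] with ω hω
      simp only [Pi.sub_apply] at hω ⊢
      rw [hω]
      simp only [W]
      ring
    rw [eLpNorm_congr_ae hcond]
    refine (eLpNorm_sub_le hWm.aestronglyMeasurable
      integrable_condExp.aestronglyMeasurable le_rfl).trans ?_
    have := eLpNorm_condExp_le_eLpNorm (m := sigmaX X n) (μ := P) W (p := 1) le_rfl
    rw [two_mul]
    exact add_le_add hW1 (this.trans hW1)
  -- Markov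
  intro δ hδ
  have h2K : 2 * K ≠ ∞ := (ENNReal.mul_lt_top (by norm_num) hKfin).ne
  set C : ℝ := (2 * K).toReal / δ + 1 with hC
  have hCpos : 0 < C := by positivity
  refine ⟨C, limsup_le_of_le (h := Eventually.of_forall fun n => ?_)⟩
  have hm : sigmaX X n ≤ (inferInstance : MeasurableSpace Ω) :=
    iSup₂_le fun i _ => (hX i).comap_le
  have hSm : Measurable (S n) := by
    have : S n = fun ω => Tsum φ (fun j => X j ω) (fun j => Y j ω) n / Real.sqrt n :=
      funext (hS n)
    rw [this]
    exact (Tsum_measurable φ hφm X Y hX hY n).div_const _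
  have hae : AEMeasurable (fun ω => ‖S n ω - (P[S n | sigmaX X n]) ω‖ₑ) P :=
    (hSm.aestronglyMeasurable.sub integrable_condExp.aestronglyMeasurable).enorm
  have hmk := mul_meas_ge_le_lintegral₀ hae (ENNReal.ofReal C)
  have hmain := main n
  rw [eLpNorm_one_eq_lintegral_enorm] at hmain
  have hsub : P {ω | C < |S n ω - (P[S n | sigmaX X n]) ω|} ≤
      P {ω | ENNReal.ofReal C ≤ ‖S n ω - (P[S n | sigmaX X n]) ω‖ₑ} := by
    refine measure_mono fun ω hω => ?_
    simp only [mem_setOf_eq] at hω ⊢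
    rw [Real.enorm_eq_ofReal_abs]
    exact ENNReal.ofReal_le_ofReal hω.le
  have hfin : ENNReal.ofReal C * P {ω | C < |S n ω - (P[S n | sigmaX X n]) ω|} ≤
      ENNReal.ofReal C * ENNReal.ofReal δ := by
    calc _ ≤ ENNReal.ofReal C * P {ω | ENNReal.ofReal C ≤ ‖S n ω - (P[S n | sigmaX X n]) ω‖ₑ} := by
            gcongr
      _ ≤ 2 * K := hmk.trans hmain
      _ = ENNReal.ofReal (2 * K).toReal := (ENNReal.ofReal_toReal h2K).symm
      _ ≤ ENNReal.ofReal (C * δ) := by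
          apply ENNReal.ofReal_le_ofReal
          rw [hC, add_mul, div_mul_cancel₀ _ hδ.ne']
          linarith
      _ = _ := ENNReal.ofReal_mul hCpos.le
  exact (ENNReal.mul_le_mul_iff_right (by simpa using hCpos) ENNReal.ofReal_ne_top).1 hfin

/-- For iid copies `(X_i, Y_i)` of a pair `(X,Y)` with `E[Y²] < ∞` and continuous
marginal cdf `F` of `X`, both `Aₙ − E(Aₙ | X₁,…,Xₙ)` and `Bₙ − E(Bₙ | X₁,…,Xₙ)`
are bounded in probability. -/
theorem centered_A_B_bounded_in_probability
    {Ω : Type*} [MeasurableSpace Ω] (P : Measure Ω) [IsProbabilityMeasure P]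
    (X Y : ℕ → Ω → ℝ) (μ : Measure (ℝ × ℝ)) [IsProbabilityMeasure μ] (F : ℝ → ℝ)
    (hmeas : ∀ i, Measurable (fun ω => (X i ω, Y i ω)))
    (hindep : iIndepFun (fun i ω => (X i ω, Y i ω)) P)
    (hlaw : ∀ i, Measure.map (fun ω => (X i ω, Y i ω)) P = μ)
    (hF : ∀ x, F x = (μ {p | p.1 ≤ x}).toReal)
    (hFcont : Continuous F)
    (hY2 : Integrable (fun p : ℝ × ℝ => p.2 ^ 2) μ) :
    IsBoundedInProbability P
      (fun n ω => Aseq X Y n ω - (P[Aseq X Y n | sigmaX X n]) ω) ∧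
    IsBoundedInProbability P
      (fun n ω => Bseq X Y n ω - (P[Bseq X Y n | sigmaX X n]) ω) := by
  refine ⟨general_bounded P X Y μ hmeas hindep hlaw hY2 (fun a => max a 0) (by fun_prop)
    (fun a b => abs_max_sub_max_le_abs a b 0) (by simp) _ (fun n ω => ?_),
    general_bounded P X Y μ hmeas hindep hlaw hY2 (fun a => |a|) (by fun_prop)
    (fun a b => abs_abs_sub_abs_le_abs_sub a b) (by simp) _ (fun n ω => ?_)⟩
  · simp only [Aseq, Tsum, concomitant_eq]
  · simp only [Bseq, Tsum, concomitant_eq]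
end

section
/- Let U_1, …, U_n be independent uniform-[0,1] random variables with order statistics U_{1:n} ≤ ⋯ ≤ U_{n:n}, and set p_{i,n} := i/(n+1). Then max_{1 ≤ i ≤ n} |U_{i:n} − p_{i,n}| → 0 in probability as n → ∞; more precisely, for every λ > 0, P(max_{1 ≤ i ≤ n} |U_{i:n} − p_{i,n}| > λ) ≤ 4n exp{−√n λ/20} for all sufficiently large n. -/
open MeasureTheory ProbabilityTheory Filter Set

lemma hoeff_count {Ω : Type*} [MeasurableSpace Ω] (P : Measure Ω) [IsProbabilityMeasure P]
    (U : ℕ → Ω → ℝ) (hUmeas : ∀ i, Measurable (U i)) (hUindep : iIndepFun U P)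
    (A : Set ℝ) (hA : MeasurableSet A) (q : ℝ) (hq : ∀ i, P.real (U i ⁻¹' A) = q)
    (n : ℕ) (hn : 0 < n) (lam a : ℝ) (hlam : 0 < lam) (ha : n * q + n * lam ≤ a) :
    P {ω | a ≤ ∑ j ∈ Finset.Icc 1 n, A.indicator (fun _ => (1:ℝ)) (U j ω)}
      ≤ ENNReal.ofReal (Real.exp (-2 * n * lam ^ 2)) := by
  have hgm : Measurable (A.indicator (fun _ => (1:ℝ))) := measurable_const.indicator hA
  have hint : ∀ i, ∫ ω, A.indicator (fun _ => (1:ℝ)) (U i ω) ∂P = q := by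
    intro i
    have : (fun ω => A.indicator (fun _ => (1:ℝ)) (U i ω))
        = (U i ⁻¹' A).indicator (fun _ => (1:ℝ)) := by
      ext ω; rfl
    rw [this, integral_indicator_const _ (hUmeas i hA), hq i]; simp
  have hind : iIndepFun (fun i ω => A.indicator (fun _ => (1:ℝ)) (U i ω) - q) P :=
    hUindep.comp (fun _ x => A.indicator (fun _ => (1:ℝ)) x - q) (fun _ => hgm.sub_const q)
  have hsub : ∀ i ∈ Finset.Icc 1 n, HasSubgaussianMGF
      (fun ω => A.indicator (fun _ => (1:ℝ)) (U i ω) - q) ((‖(1:ℝ) - 0‖₊ / 2) ^ 2) P := by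
    intro i _
    have := hasSubgaussianMGF_of_mem_Icc (μ := P) (a := 0) (b := 1)
      (X := fun ω => A.indicator (fun _ => (1:ℝ)) (U i ω))
      (hgm.comp (hUmeas i)).aemeasurable
      (ae_of_all _ fun ω => by
        by_cases h : U i ω ∈ A <;> simp [h])
    rw [hint i] at this
    exact this
  have key := HasSubgaussianMGF.measure_sum_ge_le_of_iIndepFun hind hsub
    (ε := n * lam) (by positivity)
  have hb : P {ω | a ≤ ∑ j ∈ Finset.Icc 1 n, A.indicator (fun _ => (1:ℝ)) (U j ω)} ≤
      P {ω | n * lam ≤ ∑ j ∈ Finset.Icc 1 n, (A.indicator (fun _ => (1:ℝ)) (U j ω) - q)} := by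
    apply measure_mono
    intro ω hω
    simp only [mem_ofPred_eq, Finset.sum_sub_distrib, Finset.sum_const, Nat.card_Icc,
      nsmul_eq_mul, Nat.add_sub_cancel] at hω ⊢
    linarith
  refine hb.trans ?_
  rw [← ofReal_measureReal]
  apply ENNReal.ofReal_le_ofReal
  refine key.trans (le_of_eq ?_)
  congr 1
  have : (n:ℝ) ≠ 0 := by positivity
  simp
  field_simp

lemma countP_eq_sum {Ω : Type*} (U : ℕ → Ω → ℝ) (n : ℕ) (ω : Ω) (p : ℝ → Prop)
    [DecidablePred p] :
    ((((Finset.Icc 1 n).val.map (fun j => U j ω)).sort (· ≤ ·)).countP (fun x => p x) : ℝ)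
      = ∑ j ∈ Finset.Icc 1 n, {x | p x}.indicator (fun _ => (1:ℝ)) (U j ω) := by
  rw [← Multiset.coe_countP, Multiset.sort_eq, Multiset.countP_map]
  simp only [Set.indicator, mem_ofPred_eq]
  rw [Finset.sum_boole]
  rfl

lemma orderStat_aux {Ω : Type*} (U : ℕ → Ω → ℝ) (n i : ℕ) (ω : Ω) (hi : i ∈ Finset.Icc 1 n) :
    (∃ j, orderStat U n i ω = U j ω) ∧
    (∀ t, t < orderStat U n i ω → (n:ℝ) - i + 1 ≤
      ∑ j ∈ Finset.Icc 1 n, (Ioi t).indicator (fun _ => (1:ℝ)) (U j ω)) ∧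
    (∀ t, orderStat U n i ω < t → (i:ℝ) ≤
      ∑ j ∈ Finset.Icc 1 n, (Iio t).indicator (fun _ => (1:ℝ)) (U j ω)) := by
  obtain ⟨h1, h2⟩ := Finset.mem_Icc.1 hi
  have hgt := fun t : ℝ => countP_eq_sum U n ω (fun x => t < x)
  have hlt := fun t : ℝ => countP_eq_sum U n ω (fun x => x < t)
  unfold orderStat
  have hmem : ∀ x ∈ ((Finset.Icc 1 n).val.map (fun j => U j ω)).sort (· ≤ ·), ∃ j, x = U j ω := by
    intro x hx
    rw [Multiset.mem_sort, Multiset.mem_map] at hx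
    obtain ⟨j, _, h⟩ := hx
    exact ⟨j, h.symm⟩
  have hlen : (((Finset.Icc 1 n).val.map (fun j => U j ω)).sort (· ≤ ·)).length = n := by
    simp
  have hs : (((Finset.Icc 1 n).val.map (fun j => U j ω)).sort (· ≤ ·)).Pairwise (· ≤ ·) :=
    Multiset.pairwise_sort _ _
  generalize ((Finset.Icc 1 n).val.map (fun j => U j ω)).sort (· ≤ ·) = L at *
  have hil : i - 1 < L.length := by omega
  rw [List.getD_eq_getElem _ _ hil]
  have hmono : ∀ a b (ha : a < L.length) (hb : b < L.length), a ≤ b → L[a] ≤ L[b] := by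
    intro a b ha hb hab
    rcases hab.eq_or_lt with rfl | h
    · exact le_rfl
    · exact List.pairwise_iff_getElem.1 hs a b ha hb h
  refine ⟨hmem _ (List.getElem_mem _), fun t ht => ?_, fun t ht => ?_⟩
  · refine le_trans ?_ (hgt t).le
    have h3 : (L.drop (i-1)).countP (fun x => t < x) = (L.drop (i-1)).length := by
      rw [List.countP_eq_length]
      intro x hx
      obtain ⟨k, hk, rfl⟩ := List.getElem_of_mem hx
      rw [List.getElem_drop]
      simp only [decide_eq_true_eq]
      exact ht.trans_le (hmono _ _ _ _ (by omega))
    have h4 := (List.drop_sublist (i-1) L).countP_le (p := fun x => decide (t < x))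
    rw [h3, List.length_drop, hlen] at h4
    have h5 : n + 1 ≤ L.countP (fun x => decide (t < x)) + i := by omega
    have : (n:ℝ) + 1 ≤ (L.countP (fun x => decide (t < x)) : ℝ) + i := by exact_mod_cast h5
    linarith
  · refine le_trans ?_ (hlt t).le
    have h3 : (L.take i).countP (fun x => x < t) = (L.take i).length := by
      rw [List.countP_eq_length]
      intro x hx
      obtain ⟨k, hk, rfl⟩ := List.getElem_of_mem hx
      rw [List.getElem_take]
      simp only [decide_eq_true_eq]
      rw [List.length_take] at hk
      exact (hmono _ _ _ _ (by omega)).trans_lt ht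
    have h4 := (List.take_sublist i L).countP_le (p := fun x => decide (x < t))
    rw [h3, List.length_take, hlen] at h4
    have h5 : i ≤ L.countP (fun x => decide (x < t)) := by omega
    exact_mod_cast h5

lemma main_bound
    {Ω : Type*} [MeasurableSpace Ω] (P : Measure Ω) [IsProbabilityMeasure P]
    (U : ℕ → Ω → ℝ)
    (hUmeas : ∀ i, Measurable (U i))
    (hUindep : iIndepFun U P)
    (hUunif : ∀ i, Measure.map (U i) P = volume.restrict (Icc (0:ℝ) 1))
    (lam : ℝ) (hlam : 0 < lam) (n : ℕ) :
    P {ω | ∃ i ∈ Finset.Icc 1 n, lam < |orderStat U n i ω - (i:ℝ) / ((n:ℝ) + 1)|}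
        ≤ ENNReal.ofReal (2 * n * Real.exp (-2 * n * lam ^ 2)) := by
  have hae : ∀ᵐ ω ∂P, ∀ j, U j ω ∈ Icc (0:ℝ) 1 := by
    rw [ae_all_iff]
    intro j
    have : ∀ᵐ x ∂(Measure.map (U j) P), x ∈ Icc (0:ℝ) 1 := by
      rw [hUunif j]; exact ae_restrict_mem measurableSet_Icc
    exact ae_of_ae_map (hUmeas j).aemeasurable this
  have hP : ∀ j (A : Set ℝ), MeasurableSet A →
      P.real (U j ⁻¹' A) = (volume : Measure ℝ).real (A ∩ Icc 0 1) := by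
    intro j A hA
    rw [measureReal_def, ← Measure.map_apply (hUmeas j) hA, hUunif j,
      Measure.restrict_apply hA, measureReal_def]
  set E := ENNReal.ofReal (Real.exp (-2 * n * lam ^ 2)) with hE
  have hi : ∀ i ∈ Finset.Icc 1 n,
      P {ω | lam < |orderStat U n i ω - (i:ℝ) / ((n:ℝ) + 1)|} ≤ E + E := by
    intro i hi
    obtain ⟨h1, h2⟩ := Finset.mem_Icc.1 hi
    have hn : 0 < n := by omega
    have h2' : (i:ℝ) ≤ n := by exact_mod_cast h2
    set p : ℝ := (i:ℝ) / ((n:ℝ) + 1) with hp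
    have hp0 : 0 ≤ p := by positivity
    have hpi : p * (n + 1) = i := by rw [hp]; field_simp
    have hp1 : p ≤ 1 := by rw [hp, div_le_one (by positivity)]; linarith
    have hup : P {ω | p + lam < orderStat U n i ω} ≤ E := by
      by_cases ht : p + lam < 1
      · refine le_trans (measure_mono ?_) (hoeff_count P U hUmeas hUindep (Ioi (p + lam))
          measurableSet_Ioi (1 - (p + lam)) ?_ n hn lam (n - i + 1) hlam ?_)
        · intro ω hω
          exact (orderStat_aux U n i ω hi).2.1 _ hω
        · intro j
          rw [hP j _ measurableSet_Ioi]
          have : Ioi (p + lam) ∩ Icc 0 1 = Ioc (p + lam) 1 := by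
            ext x; simp only [mem_inter_iff, mem_Ioi, mem_Icc, mem_Ioc]
            constructor
            · tauto
            · rintro ⟨h, h'⟩; exact ⟨h, by linarith, h'⟩
          rw [this, Real.volume_real_Ioc_of_le ht.le]
        · nlinarith
      · refine le_trans (le_of_eq ?_) zero_le
        rw [measure_eq_zero_iff_ae_notMem]
        filter_upwards [hae] with ω hω h
        obtain ⟨j, hj⟩ := (orderStat_aux U n i ω hi).1
        rw [hj] at h
        have := (hω j).2
        linarith
    have hlo : P {ω | orderStat U n i ω < p - lam} ≤ E := by
      by_cases ht : 0 < p - lam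
      · refine le_trans (measure_mono ?_) (hoeff_count P U hUmeas hUindep (Iio (p - lam))
          measurableSet_Iio (p - lam) ?_ n hn lam i hlam ?_)
        · intro ω hω
          exact (orderStat_aux U n i ω hi).2.2 _ hω
        · intro j
          rw [hP j _ measurableSet_Iio]
          have : Iio (p - lam) ∩ Icc 0 1 = Ico 0 (p - lam) := by
            ext x; simp only [mem_inter_iff, mem_Iio, mem_Icc, mem_Ico]
            constructor
            · tauto
            · rintro ⟨h, h'⟩; exact ⟨h', h, by linarith⟩
          rw [this, Real.volume_real_Ico_of_le ht.le, sub_zero]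
        · nlinarith
      · refine le_trans (le_of_eq ?_) zero_le
        rw [measure_eq_zero_iff_ae_notMem]
        filter_upwards [hae] with ω hω h
        obtain ⟨j, hj⟩ := (orderStat_aux U n i ω hi).1
        rw [hj] at h
        have := (hω j).1
        linarith
    refine le_trans (measure_mono ?_) ((measure_union_le _ _).trans (add_le_add hup hlo))
    intro ω hω
    simp only [mem_ofPred_eq] at hω
    rcases lt_abs.1 hω with h | h
    · left; simp only [mem_ofPred_eq]; linarith
    · right; simp only [mem_ofPred_eq]; linarith
  have : {ω | ∃ i ∈ Finset.Icc 1 n, lam < |orderStat U n i ω - (i:ℝ) / ((n:ℝ) + 1)|}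
      = ⋃ i ∈ Finset.Icc 1 n, {ω | lam < |orderStat U n i ω - (i:ℝ) / ((n:ℝ) + 1)|} := by
    ext ω; simp
  rw [this]
  refine (measure_biUnion_finset_le _ _).trans ((Finset.sum_le_sum hi).trans (le_of_eq ?_))
  rw [Finset.sum_const, Nat.card_Icc, Nat.add_sub_cancel, nsmul_eq_mul, hE,
    ← ENNReal.ofReal_add (by positivity) (by positivity), ← ENNReal.ofReal_natCast,
    ← ENNReal.ofReal_mul (by positivity)]
  congr 1; ring

/-- For iid uniform-[0,1] random variables with order statistics
`U_{1:n} ≤ ⋯ ≤ U_{n:n}` and `p_{i,n} = i/(n+1)`,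
`max_{1 ≤ i ≤ n} |U_{i:n} − p_{i,n}| → 0` in probability; more precisely, for every
`λ > 0`, `P(max_{1 ≤ i ≤ n} |U_{i:n} − p_{i,n}| > λ) ≤ 4 n exp(−√n λ/20)` for all
sufficiently large `n`. -/
theorem max_deviation_order_statistics
    {Ω : Type*} [MeasurableSpace Ω] (P : Measure Ω) [IsProbabilityMeasure P]
    (U : ℕ → Ω → ℝ)
    (hUmeas : ∀ i, Measurable (U i))
    (hUindep : iIndepFun U P)
    (hUunif : ∀ i, Measure.map (U i) P = volume.restrict (Icc (0:ℝ) 1)) :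
    (∀ ε : ℝ, 0 < ε →
      Tendsto (fun n : ℕ =>
        P {ω | ∃ i ∈ Finset.Icc 1 n, ε < |orderStat U n i ω - (i:ℝ) / ((n:ℝ) + 1)|})
        atTop (nhds 0)) ∧
    ∀ lam : ℝ, 0 < lam → ∃ N : ℕ, ∀ n ≥ N,
      P {ω | ∃ i ∈ Finset.Icc 1 n, lam < |orderStat U n i ω - (i:ℝ) / ((n:ℝ) + 1)|}
        ≤ ENNReal.ofReal (4 * n * Real.exp (-(Real.sqrt n * lam) / 20)) := by
  have hmain : ∀ lam : ℝ, 0 < lam → ∃ N : ℕ, ∀ n ≥ N,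
      P {ω | ∃ i ∈ Finset.Icc 1 n, lam < |orderStat U n i ω - (i:ℝ) / ((n:ℝ) + 1)|}
        ≤ ENNReal.ofReal (4 * n * Real.exp (-(Real.sqrt n * lam) / 20)) := by
    intro lam hlam
    obtain ⟨N, hN⟩ := exists_nat_ge ((1 / lam) ^ 2)
    refine ⟨N, fun n hn => (main_bound P U hUmeas hUindep hUunif lam hlam n).trans ?_⟩
    apply ENNReal.ofReal_le_ofReal
    have hn' : (1 / lam) ^ 2 ≤ (n:ℝ) := hN.trans (by exact_mod_cast hn)
    have hs : 1 / lam ≤ Real.sqrt n := Real.le_sqrt_of_sq_le hn'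
    have hs1 : 1 ≤ Real.sqrt n * lam := by rwa [div_le_iff₀ hlam] at hs
    have hsq : (n:ℝ) = Real.sqrt n ^ 2 := (Real.sq_sqrt (by positivity)).symm
    have : Real.exp (-2 * n * lam ^ 2) ≤ Real.exp (-(Real.sqrt n * lam) / 20) := by
      apply Real.exp_le_exp.2
      have : -2 * (n:ℝ) * lam ^ 2 = -2 * (Real.sqrt n * lam) ^ 2 := by
        rw [mul_pow, ← hsq]; ring
      rw [this]
      nlinarith
    gcongr
    norm_num
  refine ⟨fun ε hε => ?_, hmain⟩
  obtain ⟨N, hN⟩ := hmain ε hε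
  refine tendsto_of_tendsto_of_tendsto_of_le_of_le' tendsto_const_nhds ?_
    (Eventually.of_forall fun _ => zero_le) ((eventually_ge_atTop N).mono hN)
  rw [← ENNReal.ofReal_zero]
  apply ENNReal.tendsto_ofReal
  have h1 : Tendsto (fun n : ℕ => Real.sqrt n * (ε / 20)) atTop atTop :=
    (Real.tendsto_sqrt_atTop.comp tendsto_natCast_atTop_atTop).atTop_mul_const (by positivity)
  have h2 := ((Real.tendsto_pow_mul_exp_neg_atTop_nhds_zero 2).comp h1).const_mul
    (4 * (20 / ε) ^ 2)
  rw [mul_zero] at h2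
  refine h2.congr fun n => ?_
  have hsq : (n:ℝ) = Real.sqrt n ^ 2 := (Real.sq_sqrt (by positivity)).symm
  simp only [Function.comp]
  rw [mul_pow, ← hsq, show -(Real.sqrt n * (ε / 20)) = -(Real.sqrt n * ε) / 20 by ring]
  field_simp
end
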